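/- arXiv:2510.27360 — 3 statements merged into one kernel-verified Lean document; each statement's English description precedes it below -/
import Mathlib

section
/- Poincaré–Wirtinger inequality with sharp constant 1/2: for any function f of bounded variation on an open interval I ⊂ ℝ, the mean oscillation satisfies osc(f,I) ≤ (1/2)|Df|(I). -/
open MeasureTheory Set Filter
open scoped ENNReal

/-- Mean oscillation of `f` over the interval `(x, y)`. -/
noncomputable def oscI (f : ℝ → ℝ) (x y : ℝ) : ℝ :=
  (y - x)⁻¹ * ∫ t in x..y, |f t - (y - x)⁻¹ * ∫ s in x..y, f s|

/-- Total variation of the distributional derivative of `f` on `(x, y)`: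
the supremum of `∫ f φ'` over smooth `φ` supported in `(x, y)` with `‖φ‖_∞ ≤ 1`. -/
noncomputable def varD (f : ℝ → ℝ) (x y : ℝ) : ℝ≥0∞ :=
  ⨆ φ : {φ : ℝ → ℝ // ContDiff ℝ (⊤ : ℕ∞) φ ∧ HasCompactSupport φ ∧
      tsupport φ ⊆ Set.Ioo x y ∧ ∀ t, |φ t| ≤ 1},
    ENNReal.ofReal (∫ t in x..y, f t * deriv (φ : ℝ → ℝ) t)

lemma smooth_test (x y : ℝ) (hxy : x < y) (f : ℝ → ℝ)
    (hbv : varD f x y < ⊤) (η σ : ℝ → ℝ) (hη : ContDiff ℝ (⊤ : ℕ∞) η)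
    (hσ : ContDiff ℝ (⊤ : ℕ∞) σ) (h0 : ∀ t, 0 ≤ η t) (h1 : ∀ t, η t ≤ 1)
    (hs : ∀ t, |σ t| ≤ 1) (a b : ℝ) (hxa : x < a) (hby : b < y)
    (ha : ∀ t, t ≤ a → η t = 0) (hb : ∀ t, b ≤ t → η t = 0)
    (hE : 0 < ∫ t in x..y, η t) :
    ∫ t in x..y, f t * (η t * (σ t - (∫ t in x..y, η t * σ t) / (∫ t in x..y, η t)))
      ≤ (y - x) / 2 * (varD f x y).toReal := by
  set c := (∫ t in x..y, η t * σ t) / (∫ t in x..y, η t) with hc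
  set u : ℝ → ℝ := fun t => η t * (σ t - c) with hu
  have hηc : Continuous η := hη.continuous
  have hσc : Continuous σ := hσ.continuous
  have huc : Continuous u := by fun_prop
  have hus : ContDiff ℝ (⊤ : ℕ∞) u := hη.mul (hσ.sub contDiff_const)
  set P : ℝ → ℝ := fun t => ∫ r in x..t, u r with hP
  have hd : ∀ t, HasDerivAt P (u t) t := fun t =>
    intervalIntegral.integral_hasDerivAt_right (huc.intervalIntegrable _ _)
      (huc.stronglyMeasurableAtFilter _ _) huc.continuousAt
  have hderiv : deriv P = u := funext fun t => (hd t).deriv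
  have hPs : ContDiff ℝ (⊤ : ℕ∞) P := by
    rw [contDiff_infty_iff_deriv]
    exact ⟨fun t => (hd t).differentiableAt, by rw [hderiv]; exact hus⟩
  have iη : ∀ p q, IntervalIntegrable η volume p q := fun p q => hηc.intervalIntegrable _ _
  have iησ : ∀ p q, IntervalIntegrable (fun t => η t * σ t) volume p q :=
    fun p q => (hηc.mul hσc).intervalIntegrable _ _
  have hPform : ∀ t, P t = (∫ r in x..t, η r * σ r) - c * ∫ r in x..t, η r := by
    intro t
    rw [← intervalIntegral.integral_const_mul, ← intervalIntegral.integral_sub (iησ _ _)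
      ((iη _ _).const_mul c)]
    apply intervalIntegral.integral_congr
    intro r _
    simp only [hu]; ring
  have hPy : P y = 0 := by
    rw [hPform, hc]; field_simp; ring
  have hPa : ∀ t, t ≤ a → P t = 0 := by
    intro t ht
    have : P t = ∫ r in x..t, (0 : ℝ) := by
      apply intervalIntegral.integral_congr
      intro r hr
      have : r ≤ a := hr.2.trans (max_le hxa.le ht)
      simp [hu, ha r this]
    simpa using this
  have hPb : ∀ t, b ≤ t → P t = 0 := by
    intro t ht
    have h2 : P t = P y + ∫ r in y..t, u r :=
      (intervalIntegral.integral_add_adjacent_intervals (huc.intervalIntegrable _ _)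
        (huc.intervalIntegrable _ _)).symm
    have : (∫ r in y..t, u r) = ∫ r in y..t, (0 : ℝ) := by
      apply intervalIntegral.integral_congr
      intro r hr
      have : b ≤ r := (le_min hby.le ht).trans hr.1
      simp [hu, hb r this]
    rw [h2, hPy, this]; simp
  have habs : ∀ p q, p ≤ q → |∫ r in p..q, η r * σ r| ≤ ∫ r in p..q, η r := by
    intro p q hpq
    refine (intervalIntegral.abs_integral_le_integral_abs hpq).trans ?_
    refine intervalIntegral.integral_mono_on hpq (iησ p q).abs (iη p q) ?_
    intro r _
    rw [abs_mul, abs_of_nonneg (h0 r)]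
    exact mul_le_of_le_one_right (h0 r) (hs r)
  have hEL : (∫ t in x..y, η t) ≤ y - x := by
    have := intervalIntegral.integral_mono_on hxy.le (iη x y)
      (intervalIntegrable_const (c := (1:ℝ))) (fun r _ => h1 r)
    simpa using this
  have hbound : ∀ t, |P t| ≤ (y - x) / 2 := by
    intro t
    by_cases hta : t ≤ a
    · rw [hPa t hta]; simp; linarith
    by_cases htb : b ≤ t
    · rw [hPb t htb]; simp; linarith
    push Not at hta htb
    have e1 := habs x t (by linarith)
    have e2 := habs t y (by linarith)
    have e3 := intervalIntegral.integral_add_adjacent_intervals (iησ x t) (iησ t y)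
    have e4 := intervalIntegral.integral_add_adjacent_intervals (iη x t) (iη t y)
    have e5 := hPform t
    rw [hc, ← e3] at e5
    set A := ∫ r in x..t, η r * σ r
    set B := ∫ r in t..y, η r * σ r
    set N := ∫ r in x..t, η r
    set K := ∫ r in t..y, η r
    set E := ∫ r in x..y, η r
    have e6 : P t * E = A * K - B * N := by
      rw [e5]; field_simp; rw [← e4]; ring
    have hN : 0 ≤ N := (abs_nonneg _).trans e1
    have hK : 0 ≤ K := (abs_nonneg _).trans e2
    have e7 : |P t| * E ≤ E / 2 * E := by
      calc |P t| * E = |A * K - B * N| := by rw [← e6, abs_mul, abs_of_pos hE]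
        _ ≤ |A * K| + |B * N| := abs_sub _ _
        _ = |A| * K + |B| * N := by rw [abs_mul, abs_mul, abs_of_nonneg hN, abs_of_nonneg hK]
        _ ≤ N * K + K * N := by gcongr
        _ ≤ E / 2 * E := by rw [← e4]; nlinarith [sq_nonneg (N - K)]
    have := le_of_mul_le_mul_right e7 hE
    linarith
  have hsupp : tsupport P ⊆ Icc a b := by
    apply closure_minimal _ isClosed_Icc
    intro t ht
    constructor
    · by_contra h; push Not at h; exact ht (hPa t h.le)
    · by_contra h; push Not at h; exact ht (hPb t h.le)
  have hL : 0 < 2 / (y - x) := by have := sub_pos.2 hxy; positivity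
  set φ : ℝ → ℝ := fun t => 2 / (y - x) * P t with hφ
  have hφsupp : tsupport φ ⊆ tsupport P := by
    apply closure_mono
    intro t ht h
    exact ht (by simp [hφ, h])
  have hφ' : ContDiff ℝ (⊤ : ℕ∞) φ ∧ HasCompactSupport φ ∧
      tsupport φ ⊆ Set.Ioo x y ∧ ∀ t, |φ t| ≤ 1 := by
    refine ⟨contDiff_const.mul hPs, ?_, ?_, ?_⟩
    · exact isCompact_Icc.of_isClosed_subset (isClosed_tsupport _) (hφsupp.trans hsupp)
    · exact (hφsupp.trans hsupp).trans (Icc_subset_Ioo hxa hby)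
    · intro t
      rw [hφ]; simp only
      rw [abs_mul, abs_of_pos hL]
      calc _ ≤ 2 / (y - x) * ((y - x) / 2) := by gcongr; exact hbound t
        _ = 1 := by have := (sub_pos.2 hxy).ne'; field_simp
  have hsup : ENNReal.ofReal (∫ t in x..y, f t * deriv φ t) ≤ varD f x y :=
    le_iSup (fun φ : {φ : ℝ → ℝ // ContDiff ℝ (⊤ : ℕ∞) φ ∧ HasCompactSupport φ ∧
      tsupport φ ⊆ Set.Ioo x y ∧ ∀ t, |φ t| ≤ 1} =>
        ENNReal.ofReal (∫ t in x..y, f t * deriv (φ : ℝ → ℝ) t)) ⟨φ, hφ'⟩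
  have h3 := (ENNReal.ofReal_le_iff_le_toReal hbv.ne).1 hsup
  have hdφ : ∀ t, deriv φ t = 2 / (y - x) * u t := fun t => ((hd t).const_mul _).deriv
  have h4 : (∫ t in x..y, f t * deriv φ t) = 2 / (y - x) * ∫ t in x..y, f t * u t := by
    rw [← intervalIntegral.integral_const_mul]
    congr 1; ext t; rw [hdφ]; ring
  rw [h4] at h3
  have hyx := sub_pos.2 hxy
  calc (∫ t in x..y, f t * u t) = (y - x) / 2 * (2 / (y - x) * ∫ t in x..y, f t * u t) := by
        field_simp
    _ ≤ _ := by gcongr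

open Topology in
/-- Smooth functions approximating a bounded measurable function almost everywhere. -/
lemma smooth_approx (s : ℝ → ℝ) (hm : AEStronglyMeasurable s volume) (hs : ∀ t, |s t| ≤ 1) :
    ∃ σ : ℕ → ℝ → ℝ, (∀ n, ContDiff ℝ (⊤ : ℕ∞) (σ n)) ∧ (∀ n t, |σ n t| ≤ 1) ∧
      ∀ᵐ t, Tendsto (fun n => σ n t) atTop (𝓝 (s t)) := by
  have hloc : LocallyIntegrable s volume :=
    (locallyIntegrable_const (1 : ℝ)).mono hm (Eventually.of_forall fun t => by simpa using hs t)
  let φ : ℕ → ContDiffBump (0 : ℝ) := fun n =>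
    ⟨1 / ((n : ℝ) + 1), 2 * (1 / ((n : ℝ) + 1)), by positivity, by
      have : 0 < 1 / ((n : ℝ) + 1) := by positivity
      linarith⟩
  refine ⟨fun n => MeasureTheory.convolution ((φ n).normed volume) s
    (ContinuousLinearMap.lsmul ℝ ℝ) volume, fun n => ?_, fun n t => ?_, ?_⟩
  · exact (φ n).hasCompactSupport_normed.contDiff_convolution_left _ (φ n).contDiff_normed hloc
  · have := dist_convolution_le (μ := volume) (f := (φ n).normed volume) (g := s) (x₀ := t)
      (R := (φ n).rOut) (ε := 1) (z₀ := 0) zero_le_one (by rw [(φ n).support_normed_eq])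
      (φ n).nonneg_normed (φ n).integral_normed hm (fun r _ => by simpa using hs r)
    simpa using this
  · apply ContDiffBump.ae_convolution_tendsto_right_of_locallyIntegrable (K := 2) _ _ hloc
    · have := (tendsto_one_div_add_atTop_nhds_zero_nat (𝕜 := ℝ)).const_mul 2
      simpa [φ] using this
    · exact Eventually.of_forall fun n => le_rfl

open Topology in
/-- Smooth cutoffs of an open interval. -/
lemma smooth_cutoff (x y : ℝ) :
    ∃ η : ℕ → ℝ → ℝ, (∀ n, ContDiff ℝ (⊤ : ℕ∞) (η n)) ∧ (∀ n t, 0 ≤ η n t) ∧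
      (∀ n t, η n t ≤ 1) ∧
      (∀ n, ∃ a b, x < a ∧ b < y ∧ (∀ t, t ≤ a → η n t = 0) ∧ (∀ t, b ≤ t → η n t = 0)) ∧
      ∀ t ∈ Ioo x y, Tendsto (fun n => η n t) atTop (𝓝 1) := by
  refine ⟨fun n t => Real.smoothTransition (((n : ℝ) + 1) * (t - x) - 1) *
    Real.smoothTransition (((n : ℝ) + 1) * (y - t) - 1), fun n => ?_, fun n t => ?_,
    fun n t => ?_, fun n => ?_, fun t ht => ?_⟩
  · apply ContDiff.mul
    · exact Real.smoothTransition.contDiff.comp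
        ((contDiff_const.mul (contDiff_id.sub contDiff_const)).sub contDiff_const)
    · exact Real.smoothTransition.contDiff.comp
        ((contDiff_const.mul (contDiff_const.sub contDiff_id)).sub contDiff_const)
  · exact mul_nonneg (Real.smoothTransition.nonneg _) (Real.smoothTransition.nonneg _)
  · exact mul_le_one₀ (Real.smoothTransition.le_one _) (Real.smoothTransition.nonneg _)
      (Real.smoothTransition.le_one _)
  · have hn : (0 : ℝ) < (n : ℝ) + 1 := by positivity
    have hp : 0 < 1 / ((n : ℝ) + 1) := by positivity
    refine ⟨x + 1 / ((n : ℝ) + 1), y - 1 / ((n : ℝ) + 1), by linarith, by linarith,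
      fun t ht => ?_, fun t ht => ?_⟩
    · have : t - x ≤ 1 / ((n : ℝ) + 1) := by linarith
      rw [le_div_iff₀ hn] at this
      simp only
      rw [Real.smoothTransition.zero_of_nonpos (x := _ * (t - x) - 1) (by linarith), zero_mul]
    · have : y - t ≤ 1 / ((n : ℝ) + 1) := by linarith
      rw [le_div_iff₀ hn] at this
      simp only
      rw [Real.smoothTransition.zero_of_nonpos (x := _ * (y - t) - 1) (by linarith), mul_zero]
  · have key : ∀ d : ℝ, 0 < d → ∀ᶠ n : ℕ in atTop, 1 ≤ ((n : ℝ) + 1) * d - 1 := by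
      intro d hd
      have h1 : Tendsto (fun n : ℕ => ((n : ℝ) + 1) * d) atTop atTop :=
        (tendsto_atTop_add_const_right _ _ tendsto_natCast_atTop_atTop).atTop_mul_const hd
      filter_upwards [h1.eventually_ge_atTop 2] with n hn
      linarith
    apply tendsto_const_nhds.congr'
    filter_upwards [key _ (sub_pos.2 ht.1), key _ (sub_pos.2 ht.2)] with n h1 h2
    rw [Real.smoothTransition.one_of_one_le h1, Real.smoothTransition.one_of_one_le h2, one_mul]

open Topology in
lemma bounded_test (x y : ℝ) (hxy : x < y) (f : ℝ → ℝ)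
    (hint : IntegrableOn f (Set.Ioo x y)) (hbv : varD f x y < ⊤)
    (s : ℝ → ℝ) (hm : AEStronglyMeasurable s volume) (hs : ∀ t, |s t| ≤ 1) :
    ∫ t in x..y, f t * (s t - (∫ t in x..y, s t) / (y - x))
      ≤ (y - x) / 2 * (varD f x y).toReal := by
  obtain ⟨σ, hσ, hσ1, hσt⟩ := smooth_approx s hm hs
  obtain ⟨η, hη, h0, h1, hab, hηt⟩ := smooth_cutoff x y
  have hL := sub_pos.2 hxy
  have hf : IntervalIntegrable f volume x y :=
    (intervalIntegrable_iff_integrableOn_Ioo_of_le hxy.le).2 hint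
  have hne : ∀ᵐ t : ℝ, t ≠ y := by simp [ae_iff]
  have hηae : ∀ᵐ t : ℝ, t ∈ uIoc x y → Tendsto (fun n => η n t) atTop (𝓝 1) := by
    filter_upwards [hne] with t ht hmem
    rw [uIoc_of_le hxy.le] at hmem
    exact hηt t ⟨hmem.1, lt_of_le_of_ne hmem.2 ht⟩
  have hE : Tendsto (fun n => ∫ t in x..y, η n t) atTop (𝓝 (y - x)) := by
    have : Tendsto (fun n => ∫ t in x..y, η n t) atTop (𝓝 (∫ t in x..y, (1 : ℝ))) := by
      apply intervalIntegral.tendsto_integral_filter_of_dominated_convergence (fun _ => (1 : ℝ))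
      · exact Eventually.of_forall fun n => (hη n).continuous.aestronglyMeasurable
      · exact Eventually.of_forall fun n => Eventually.of_forall fun t _ => by
          rw [Real.norm_eq_abs, abs_of_nonneg (h0 n t)]; exact h1 n t
      · exact intervalIntegrable_const
      · exact hηae
    simpa using this
  have hS : Tendsto (fun n => ∫ t in x..y, η n t * σ n t) atTop (𝓝 (∫ t in x..y, s t)) := by
    apply intervalIntegral.tendsto_integral_filter_of_dominated_convergence (fun _ => (1 : ℝ))
    · exact Eventually.of_forall fun n =>
        ((hη n).continuous.mul (hσ n).continuous).aestronglyMeasurable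
    · exact Eventually.of_forall fun n => Eventually.of_forall fun t _ => by
        rw [Real.norm_eq_abs, abs_mul, abs_of_nonneg (h0 n t)]
        exact mul_le_one₀ (h1 n t) (abs_nonneg _) (hσ1 n t)
    · exact intervalIntegrable_const
    · filter_upwards [hηae, hσt] with t h2 h3 hmem
      simpa using (h2 hmem).mul h3
  have hC := hS.div hE hL.ne'
  set C := (∫ t in x..y, s t) / (y - x) with hCdef
  have hCb : ∀ᶠ n in atTop, |(∫ t in x..y, η n t * σ n t) / (∫ t in x..y, η n t)| ≤ |C| + 1 :=
    (hC.abs).eventually_le_const (by linarith)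
  have hlim : Tendsto (fun n => ∫ t in x..y, f t *
      (η n t * (σ n t - (∫ t in x..y, η n t * σ n t) / (∫ t in x..y, η n t)))) atTop
      (𝓝 (∫ t in x..y, f t * (s t - C))) := by
    apply intervalIntegral.tendsto_integral_filter_of_dominated_convergence
      (fun t => |f t| * (1 + (|C| + 1)))
    · refine Eventually.of_forall fun n => hf.def'.aestronglyMeasurable.mul ?_
      exact ((hη n).continuous.mul ((hσ n).continuous.sub continuous_const)).aestronglyMeasurable
    · filter_upwards [hCb] with n hn
      refine Eventually.of_forall fun t _ => ?_
      rw [Real.norm_eq_abs, abs_mul, abs_mul, abs_of_nonneg (h0 n t)]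
      refine mul_le_mul_of_nonneg_left ?_ (abs_nonneg _)
      calc _ ≤ 1 * |σ n t - (∫ t in x..y, η n t * σ n t) / (∫ t in x..y, η n t)| := by
            gcongr; exact h1 n t
        _ ≤ |σ n t| + |(∫ t in x..y, η n t * σ n t) / (∫ t in x..y, η n t)| := by
            rw [one_mul]; exact abs_sub _ _
        _ ≤ _ := add_le_add (hσ1 n t) hn
    · exact hf.abs.mul_const _
    · filter_upwards [hηae, hσt] with t h2 h3 hmem
      have := ((h2 hmem).mul (h3.sub hC)).const_mul (f t)
      simpa using this
  apply le_of_tendsto hlim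
  filter_upwards [hE.eventually (lt_mem_nhds hL)] with n hn
  obtain ⟨a, b, hxa, hby, ha, hb⟩ := hab n
  exact smooth_test x y hxy f hbv (η n) (σ n) (hη n) (hσ n) (h0 n) (h1 n) (hσ1 n) a b hxa hby
    ha hb hn

/-- Poincaré–Wirtinger inequality with sharp constant `1/2`: for a function of bounded
variation on a bounded open interval, `osc(f, I) ≤ (1/2)|Df|(I)`. -/
theorem poincare_wirtinger (x y : ℝ) (hxy : x < y) (f : ℝ → ℝ)
    (hint : IntegrableOn f (Set.Ioo x y))
    (hbv : varD f x y < ⊤) :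
    ENNReal.ofReal (oscI f x y) ≤ (1 / 2) * varD f x y := by
  have hL := sub_pos.2 hxy
  have hf : IntervalIntegrable f volume x y :=
    (intervalIntegrable_iff_integrableOn_Ioo_of_le hxy.le).2 hint
  set m := (y - x)⁻¹ * ∫ s in x..y, f s with hmdef
  set g : ℝ → ℝ := fun t => f t - m with hg
  have hgi : IntervalIntegrable g volume x y := hf.sub intervalIntegrable_const
  set s : ℝ → ℝ := (Ioc x y).indicator (fun t => g t / |g t|) with hsdef
  have hs1 : ∀ t, |s t| ≤ 1 := by
    intro t
    by_cases ht : t ∈ Ioc x y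
    · rw [hsdef, indicator_of_mem ht, abs_div, abs_abs]
      exact div_self_le_one _
    · rw [hsdef, indicator_of_notMem ht]; simp
  have hm : AEStronglyMeasurable s volume := by
    rw [hsdef, aestronglyMeasurable_indicator_iff measurableSet_Ioc]
    have h1 : AEStronglyMeasurable g (volume.restrict (Ioc x y)) := hgi.1.aestronglyMeasurable
    exact (h1.aemeasurable.div h1.norm.aemeasurable).aestronglyMeasurable
  have key := bounded_test x y hxy f hint hbv s hm hs1
  have hsi : IntervalIntegrable s volume x y :=
    (intervalIntegrable_const (c := (1 : ℝ))).mono_fun hm.restrict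
      (Eventually.of_forall fun t => by simpa using hs1 t)
  set C := (∫ t in x..y, s t) / (y - x) with hC
  have hgs : ∀ t ∈ uIcc x y, t ∈ Ioc x y → g t * s t = |g t| := by
    intro t _ ht
    rw [hsdef, indicator_of_mem ht]
    by_cases h : g t = 0
    · simp [h]
    · have := abs_ne_zero.2 h
      field_simp
      exact (sq_abs _).symm
  have hg0 : ∫ t in x..y, g t = 0 := by
    rw [hg, intervalIntegral.integral_sub hf intervalIntegrable_const, hmdef]
    simp; field_simp; ring
  have heq : ∫ t in x..y, f t * (s t - C) = ∫ t in x..y, |g t| := by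
    have e1 : ∫ t in x..y, f t * (s t - C)
        = ∫ t in x..y, (|g t| - C * g t + m * (s t - C)) := by
      apply intervalIntegral.integral_congr_ae
      refine Eventually.of_forall fun t ht => ?_
      have h2 := hgs t (uIoc_subset_uIcc ht) (by rwa [uIoc_of_le hxy.le] at ht)
      rw [← h2]
      simp only [hg]; ring
    rw [e1, intervalIntegral.integral_add (hgi.abs.sub (hgi.const_mul C))
      ((hsi.sub intervalIntegrable_const).const_mul m),
      intervalIntegral.integral_sub hgi.abs (hgi.const_mul C),
      intervalIntegral.integral_const_mul, intervalIntegral.integral_const_mul, hg0,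
      intervalIntegral.integral_sub hsi intervalIntegrable_const, hC]
    simp; right; field_simp; ring
  rw [heq] at key
  have hosc : oscI f x y ≤ 1 / 2 * (varD f x y).toReal := by
    have : oscI f x y = (y - x)⁻¹ * ∫ t in x..y, |g t| := rfl
    rw [this]
    calc _ ≤ (y - x)⁻¹ * ((y - x) / 2 * (varD f x y).toReal) := by gcongr
      _ = _ := by field_simp
  calc ENNReal.ofReal (oscI f x y) ≤ ENNReal.ofReal (1 / 2 * (varD f x y).toReal) :=
        ENNReal.ofReal_le_ofReal hosc
    _ = (1 / 2) * varD f x y := by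
        rw [ENNReal.ofReal_mul (by norm_num), ENNReal.ofReal_toReal hbv.ne]
        congr 1
        rw [ENNReal.ofReal_div_of_pos (by norm_num)]; simp
end

section
/- The function f(x) = x^{5/2} does not satisfy the identity osc(f,I) = (1/4)|Df|(I) on any interval (α,β) with 0 < α < β; more precisely, the equality fails for some subinterval of (α,β). Equivalently, the real number s = 5/2 does not solve the equation 8s = (1+s)^{2 + 1/s}, while s = 1 does. -/
open MeasureTheory Set Filter
open scoped ENNReal

lemma aux_hasDeriv (t : ℝ) :
    HasDerivAt (fun t : ℝ => t ^ ((5 : ℝ) / 2)) ((5 : ℝ) / 2 * t ^ ((3 : ℝ) / 2)) t := by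
  have := Real.hasDerivAt_rpow_const (x := t) (p := (5 : ℝ) / 2) (Or.inr (by norm_num))
  convert this using 3
  norm_num

lemma aux_contF : Continuous (fun t : ℝ => t ^ ((5 : ℝ) / 2)) :=
  Real.continuous_rpow_const (by norm_num)

lemma aux_contF' : Continuous (fun t : ℝ => (5 : ℝ) / 2 * t ^ ((3 : ℝ) / 2)) :=
  continuous_const.mul (Real.continuous_rpow_const (by norm_num))

lemma aux_parts (φ : ℝ → ℝ) (x y : ℝ) (h1 : ContDiff ℝ (⊤ : ℕ∞) φ)
    (hs : tsupport φ ⊆ Set.Ioo x y) :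
    ∫ t in x..y, t ^ ((5 : ℝ) / 2) * deriv φ t
      = - ∫ t in x..y, ((5 : ℝ) / 2 * t ^ ((3 : ℝ) / 2)) * φ t := by
  have hx : φ x = 0 := by
    apply image_eq_zero_of_notMem_tsupport
    intro h
    exact absurd (hs h).1 (lt_irrefl _)
  have hy : φ y = 0 := by
    apply image_eq_zero_of_notMem_tsupport
    intro h
    exact absurd (hs h).2 (lt_irrefl _)
  have hc : Continuous (deriv φ) := h1.continuous_deriv (by simp)
  rw [intervalIntegral.integral_mul_deriv_eq_deriv_mul (u := fun t : ℝ => t ^ ((5 : ℝ) / 2))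
    (u' := fun t : ℝ => (5 : ℝ) / 2 * t ^ ((3 : ℝ) / 2)) (v := φ) (v' := deriv φ)
    (fun t _ => aux_hasDeriv t)
    (fun t _ => ((h1.differentiable (by simp)) t).hasDerivAt)
    (aux_contF'.intervalIntegrable _ _) (hc.intervalIntegrable _ _)]
  simp [hx, hy]

lemma aux_ftc (x y : ℝ) : ∫ t in x..y, ((5 : ℝ) / 2 * t ^ ((3 : ℝ) / 2))
    = y ^ ((5 : ℝ) / 2) - x ^ ((5 : ℝ) / 2) :=
  intervalIntegral.integral_eq_sub_of_hasDerivAt (fun t _ => aux_hasDeriv t)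
    (aux_contF'.intervalIntegrable _ _)

lemma aux_varD_le (x y : ℝ) (hx : 0 < x) (hxy : x < y) :
    varD (fun t => t ^ ((5 : ℝ) / 2)) x y
      ≤ ENNReal.ofReal (y ^ ((5 : ℝ) / 2) - x ^ ((5 : ℝ) / 2)) := by
  unfold varD
  refine iSup_le ?_
  rintro ⟨φ, h1, h2, h3, h4⟩
  apply ENNReal.ofReal_le_ofReal
  simp only
  rw [aux_parts φ x y h1 h3, ← aux_ftc, ← intervalIntegral.integral_neg]
  apply intervalIntegral.integral_mono_on hxy.le
  · exact ((aux_contF'.mul h1.continuous).neg).intervalIntegrable _ _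
  · exact aux_contF'.intervalIntegrable _ _
  · intro t ht
    have ht0 : 0 ≤ t := hx.le.trans ht.1
    have : 0 ≤ (5 : ℝ) / 2 * t ^ ((3 : ℝ) / 2) := by positivity
    have := (abs_le.1 (h4 t)).1
    nlinarith

lemma aux_le_varD (x y r : ℝ) (hx : 0 < x) (hr : 0 < r) (hry : r < (y - x) / 2) :
    ENNReal.ofReal (((x + y) / 2 + r) ^ ((5 : ℝ) / 2) - ((x + y) / 2 - r) ^ ((5 : ℝ) / 2)) ≤
    varD (fun t => t ^ ((5 : ℝ) / 2)) x y := by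
  let B : ContDiffBump ((x + y) / 2 : ℝ) :=
    ⟨r, (r + (y - x) / 2) / 2, hr, by linarith⟩
  have hts : tsupport (fun t => - B t) ⊆ Set.Ioo x y := by
    have : tsupport (fun t => - B t) = tsupport B := by
      simp only [tsupport]
      congr 1
      ext t
      simp
    rw [this, B.tsupport_eq, Real.closedBall_eq_Icc]
    intro t ht
    have h1 := ht.1
    have h2 := ht.2
    simp only [B] at h1 h2
    constructor <;> linarith
  have hcd : ContDiff ℝ (⊤ : ℕ∞) (fun t => - B t) := B.contDiff.neg
  unfold varD
  refine le_trans ?_ (le_iSup _ ⟨fun t => - B t, hcd, ?_, hts, ?_⟩)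
  · apply ENNReal.ofReal_le_ofReal
    simp only
    rw [aux_parts _ x y hcd hts, ← aux_ftc, ← intervalIntegral.integral_neg]
    have hci : ∀ a b : ℝ, IntervalIntegrable
        (fun t => -((5 : ℝ) / 2 * t ^ ((3 : ℝ) / 2) * -B t)) volume a b := fun a b =>
      ((aux_contF'.mul hcd.continuous).neg).intervalIntegrable _ _
    calc ∫ t in ((x + y) / 2 - r)..((x + y) / 2 + r), ((5 : ℝ) / 2 * t ^ ((3 : ℝ) / 2))
        = ∫ t in ((x + y) / 2 - r)..((x + y) / 2 + r),
            -((5 : ℝ) / 2 * t ^ ((3 : ℝ) / 2) * -B t) := by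
          apply intervalIntegral.integral_congr
          intro t ht
          rw [Set.uIcc_of_le (by linarith)] at ht
          have : B t = 1 := by
            apply B.one_of_mem_closedBall
            rw [Real.closedBall_eq_Icc]
            exact ht
          simp [this]
      _ ≤ _ := by
          apply intervalIntegral.integral_mono_interval (by linarith) (by linarith) (by linarith)
          · refine (ae_restrict_iff' measurableSet_Ioc).2 (ae_of_all _ ?_)
            intro t ht
            have ht0 : 0 ≤ t := hx.le.trans ht.1.le
            have h5 : 0 ≤ (5 : ℝ) / 2 * t ^ ((3 : ℝ) / 2) := by positivity
            have := mul_nonneg h5 (B.nonneg' t)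
            simp only [Pi.zero_apply]
            linarith
          · exact hci _ _
  · exact HasCompactSupport.of_support_subset_isCompact (K := tsupport B) B.hasCompactSupport
      (by intro t ht; apply subset_tsupport; simpa using ht)
  · intro t
    rw [abs_neg, abs_of_nonneg (B.nonneg' t)]
    exact B.le_one

lemma aux_varD (x y : ℝ) (hx : 0 < x) (hxy : x < y) :
    varD (fun t => t ^ ((5 : ℝ) / 2)) x y
      = ENNReal.ofReal (y ^ ((5 : ℝ) / 2) - x ^ ((5 : ℝ) / 2)) := by
  apply le_antisymm (aux_varD_le x y hx hxy)
  have hc : Continuous (fun r : ℝ => ENNReal.ofReal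
      (((x + y) / 2 + r) ^ ((5 : ℝ) / 2) - ((x + y) / 2 - r) ^ ((5 : ℝ) / 2))) := by
    apply ENNReal.continuous_ofReal.comp
    exact (aux_contF.comp (by fun_prop : Continuous fun r : ℝ => (x + y) / 2 + r)).sub
      (aux_contF.comp (by fun_prop : Continuous fun r : ℝ => (x + y) / 2 - r))
  have ht := (hc.tendsto ((y - x) / 2)).mono_left (nhdsWithin_le_nhds (s := Set.Iio ((y - x) / 2)))
  have e1 : (x + y) / 2 + (y - x) / 2 = y := by ring
  have e2 : (x + y) / 2 - (y - x) / 2 = x := by ring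
  simp only [e1, e2] at ht
  refine le_of_tendsto ht ?_
  have : Set.Ioo 0 ((y - x) / 2) ∈ nhdsWithin ((y - x) / 2) (Set.Iio ((y - x) / 2)) :=
    Ioo_mem_nhdsLT (by linarith)
  filter_upwards [this] with r hr
  exact aux_le_varD x y r hx hr.1 hr.2

lemma aux_int (x y : ℝ) : ∫ t in x..y, t ^ ((5 : ℝ) / 2)
    = 2 / 7 * (y ^ ((7 : ℝ) / 2) - x ^ ((7 : ℝ) / 2)) := by
  rw [integral_rpow (Or.inl (by norm_num))]
  norm_num
  ring

lemma aux_sq (a : ℝ) (ha : 0 < a) : (a ^ 2) ^ ((5 : ℝ) / 2) = a ^ 5 ∧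
    (a ^ 2) ^ ((7 : ℝ) / 2) = a ^ 7 := by
  constructor <;>
  · rw [← Real.rpow_natCast a 2, ← Real.rpow_mul ha.le, ← Real.rpow_natCast]
    norm_num

/-- oscillation on `(x,y)`, where `m` is the mean and `z` the point where it is attained -/
lemma aux_osc (x y m z : ℝ) (hx : 0 < x) (hxy : x < y) (hz : 0 < z)
    (hzm : z ^ ((5 : ℝ) / 2) = m)
    (hm : (y - x) * m = 2 / 7 * (y ^ ((7 : ℝ) / 2) - x ^ ((7 : ℝ) / 2))) :
    (y - x) * oscI (fun t => t ^ ((5 : ℝ) / 2)) x y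
      = 2 * (2 / 7 * y ^ ((7 : ℝ) / 2) - m * y + 5 / 7 * (m * z)) := by
  have hD : 0 < y - x := sub_pos.2 hxy
  have hmean : (y - x)⁻¹ * ∫ s in x..y, s ^ ((5 : ℝ) / 2) = m := by
    rw [aux_int, ← hm]; field_simp
  have hcm : ∀ a b : ℝ, ∫ t in a..b, (t ^ ((5 : ℝ) / 2) - m)
      = 2 / 7 * (b ^ ((7 : ℝ) / 2) - a ^ ((7 : ℝ) / 2)) - m * (b - a) := by
    intro a b
    rw [intervalIntegral.integral_sub (aux_contF.intervalIntegrable _ _)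
      (continuous_const.intervalIntegrable _ _), aux_int]
    simp; ring
  have hint : (∫ s in x..y, s ^ ((5 : ℝ) / 2)) = (y - x) * m := by rw [aux_int, hm]
  have hxz : x ≤ z := by
    by_contra! h
    have h1 : m ≤ x ^ ((5 : ℝ) / 2) := by
      rw [← hzm]; exact Real.rpow_le_rpow hz.le h.le (by norm_num)
    have h2 : 0 < ∫ t in x..y, (t ^ ((5 : ℝ) / 2) - m) := by
      apply intervalIntegral.intervalIntegral_pos_of_pos_on
        ((aux_contF.sub continuous_const).intervalIntegrable _ _) _ hxy
      intro t ht
      have := Real.rpow_lt_rpow hx.le ht.1 (by norm_num : (0 : ℝ) < 5 / 2)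
      simp only [Pi.sub_apply]
      linarith
    rw [hcm] at h2
    linarith
  have hzy : z ≤ y := by
    by_contra! h
    have h1 : y ^ ((5 : ℝ) / 2) ≤ m := by
      rw [← hzm]; exact Real.rpow_le_rpow (hx.trans hxy).le h.le (by norm_num)
    have h2 : 0 < ∫ t in x..y, -(t ^ ((5 : ℝ) / 2) - m) := by
      apply intervalIntegral.intervalIntegral_pos_of_pos_on
        ((aux_contF.sub continuous_const).neg.intervalIntegrable _ _) _ hxy
      intro t ht
      have := Real.rpow_lt_rpow (hx.trans ht.1).le ht.2 (by norm_num : (0 : ℝ) < 5 / 2)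
      simp only [Pi.sub_apply, Pi.neg_apply]
      linarith
    rw [intervalIntegral.integral_neg, hcm] at h2
    linarith
  have hci : ∀ a b : ℝ, IntervalIntegrable
        (fun t : ℝ => |t ^ ((5 : ℝ) / 2) - m|) volume a b := fun a b =>
      ((aux_contF.sub continuous_const).abs).intervalIntegrable _ _
  have i1 : ∫ t in x..z, |t ^ ((5 : ℝ) / 2) - m| = - ∫ t in x..z, (t ^ ((5 : ℝ) / 2) - m) := by
    rw [← intervalIntegral.integral_neg]
    apply intervalIntegral.integral_congr
    intro t ht
    rw [Set.uIcc_of_le hxz] at ht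
    apply abs_of_nonpos
    have := Real.rpow_le_rpow (hx.le.trans ht.1) ht.2 (by norm_num : (0 : ℝ) ≤ 5 / 2)
    linarith
  have i2 : ∫ t in z..y, |t ^ ((5 : ℝ) / 2) - m| = ∫ t in z..y, (t ^ ((5 : ℝ) / 2) - m) := by
    apply intervalIntegral.integral_congr
    intro t ht
    rw [Set.uIcc_of_le hzy] at ht
    apply abs_of_nonneg
    have := Real.rpow_le_rpow hz.le ht.1 (by norm_num : (0 : ℝ) ≤ 5 / 2)
    linarith
  have hz7 : z ^ ((7 : ℝ) / 2) = m * z := by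
    rw [← hzm, ← Real.rpow_add_one hz.ne']; norm_num
  unfold oscI
  simp only [hmean]
  rw [← intervalIntegral.integral_add_adjacent_intervals (hci x z) (hci z y), i1, i2, hcm, hcm,
    hz7, ← mul_assoc, mul_inv_cancel₀ hD.ne']
  linarith

lemma aux_poly (a b : ℝ) (ha : 0 < a) (hab : a < b)
    (h : varD (fun t => t ^ ((5 : ℝ) / 2)) (a ^ 2) (b ^ 2)
          = 4 * ENNReal.ofReal (oscI (fun t => t ^ ((5 : ℝ) / 2)) (a ^ 2) (b ^ 2))) :
    (5 / 7) ^ 5 * (2 / 7) ^ 7 *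
      (b ^ 6 + b ^ 5 * a + b ^ 4 * a ^ 2 + b ^ 3 * a ^ 3 + b ^ 2 * a ^ 4 + b * a ^ 5 + a ^ 6) ^ 7
    = (a + b) ^ 2 * ((a + b) * (b ^ 2 - a ^ 2) * (b ^ 5 - a ^ 5) / 8
      + 2 / 7 * a ^ 2 * b ^ 2 *
        (b ^ 4 + b ^ 3 * a + b ^ 2 * a ^ 2 + b * a ^ 3 + a ^ 4)) ^ 5 := by
  have hb : 0 < b := ha.trans hab
  have hlt : a ^ 2 < b ^ 2 := by gcongr
  have ha2 : 0 < a ^ 2 := by positivity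
  obtain ⟨P, hP⟩ : ∃ P, P = b ^ 6 + b ^ 5 * a + b ^ 4 * a ^ 2 + b ^ 3 * a ^ 3 + b ^ 2 * a ^ 4
    + b * a ^ 5 + a ^ 6 := ⟨_, rfl⟩
  obtain ⟨Q, hQ⟩ : ∃ Q, Q = b ^ 4 + b ^ 3 * a + b ^ 2 * a ^ 2 + b * a ^ 3 + a ^ 4 := ⟨_, rfl⟩
  have hPpos : 0 < P := by rw [hP]; positivity
  obtain ⟨m, hm⟩ : ∃ m, m = 2 / 7 * P / (a + b) := ⟨_, rfl⟩
  have hmpos : 0 < m := by rw [hm]; positivity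
  obtain ⟨z, hz⟩ : ∃ z, z = m ^ ((2 : ℝ) / 5) := ⟨_, rfl⟩
  have hzpos : 0 < z := by rw [hz]; positivity
  have hzm : z ^ ((5 : ℝ) / 2) = m := by
    rw [hz, ← Real.rpow_mul hmpos.le]; norm_num
  have hz5 : z ^ 5 = m ^ 2 := by
    rw [hz, ← Real.rpow_natCast, ← Real.rpow_mul hmpos.le, ← Real.rpow_natCast]; norm_num
  have hms : (a + b) * m = 2 / 7 * P := by rw [hm]; field_simp
  have hosc := aux_osc (a ^ 2) (b ^ 2) m z ha2 hlt hzpos hzm (by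
    rw [(aux_sq a ha).2, (aux_sq b hb).2]
    have : (b ^ 2 - a ^ 2) * m = (b - a) * ((a + b) * m) := by ring
    rw [this, hms, hP]; ring)
  rw [aux_varD _ _ ha2 hlt, (aux_sq a ha).1, (aux_sq b hb).1] at h
  have h4 : (4 : ℝ≥0∞) = ENNReal.ofReal 4 := by norm_num
  rw [h4, ← ENNReal.ofReal_mul (by norm_num)] at h
  have hoscnn : 0 ≤ oscI (fun t => t ^ ((5 : ℝ) / 2)) (a ^ 2) (b ^ 2) := by
    unfold oscI
    apply mul_nonneg (inv_nonneg.2 (by linarith))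
    exact intervalIntegral.integral_nonneg hlt.le (fun _ _ => abs_nonneg _)
  have h55 : a ^ 5 < b ^ 5 := by gcongr
  rw [ENNReal.ofReal_eq_ofReal_iff (by linarith) (by linarith)] at h
  rw [(aux_sq b hb).2] at hosc
  have key : (b ^ 2 - a ^ 2) * (b ^ 5 - a ^ 5)
      = 8 * (2 / 7 * b ^ 7 - m * b ^ 2 + 5 / 7 * (m * z)) := by
    rw [h]; linarith
  have key2 : 5 / 7 * ((a + b) * (m * z)) = (a + b) * (b ^ 2 - a ^ 2) * (b ^ 5 - a ^ 5) / 8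
      + 2 / 7 * a ^ 2 * b ^ 2 * Q := by
    have e : (a + b) * (m * b ^ 2 - 2 / 7 * b ^ 7) = 2 / 7 * a ^ 2 * b ^ 2 * Q := by
      have : (a + b) * (m * b ^ 2 - 2 / 7 * b ^ 7)
        = ((a + b) * m) * b ^ 2 - 2 / 7 * b ^ 7 * (a + b) := by ring
      rw [this, hms, hP, hQ]; ring
    rw [← e]
    linear_combination (-(a + b) / 8) * key
  rw [← hP, ← hQ, ← key2]
  have e7 : (2 / 7) ^ 7 * P ^ 7 = (a + b) ^ 7 * m ^ 7 := by
    rw [← mul_pow, ← mul_pow, hms]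
  calc (5 / 7) ^ 5 * (2 / 7) ^ 7 * P ^ 7 = (5 / 7) ^ 5 * ((2 / 7) ^ 7 * P ^ 7) := by ring
    _ = (5 / 7) ^ 5 * ((a + b) ^ 7 * (m ^ 5 * m ^ 2)) := by rw [e7]; ring
    _ = _ := by rw [← hz5]; ring

open Polynomial in
lemma aux_contra (a c : ℝ) (ha : 0 < a) (hac : a < c)
    (H : ∀ b ∈ Set.Ioo a c, (5 / 7) ^ 5 * (2 / 7) ^ 7 *
      (b ^ 6 + b ^ 5 * a + b ^ 4 * a ^ 2 + b ^ 3 * a ^ 3 + b ^ 2 * a ^ 4 + b * a ^ 5 + a ^ 6) ^ 7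
    = (a + b) ^ 2 * ((a + b) * (b ^ 2 - a ^ 2) * (b ^ 5 - a ^ 5) / 8
      + 2 / 7 * a ^ 2 * b ^ 2 *
        (b ^ 4 + b ^ 3 * a + b ^ 2 * a ^ 2 + b * a ^ 3 + a ^ 4)) ^ 5) : False := by
  let p : ℝ[X] := C ((5 / 7) ^ 5 * (2 / 7) ^ 7) *
      (X ^ 6 + X ^ 5 * C a + X ^ 4 * C a ^ 2 + X ^ 3 * C a ^ 3 + X ^ 2 * C a ^ 4
        + X * C a ^ 5 + C a ^ 6) ^ 7
    - (C a + X) ^ 2 * ((C a + X) * (X ^ 2 - C a ^ 2) * (X ^ 5 - C a ^ 5) * C (1 / 8)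
      + C (2 / 7) * C a ^ 2 * X ^ 2 *
        (X ^ 4 + X ^ 3 * C a + X ^ 2 * C a ^ 2 + X * C a ^ 3 + C a ^ 4)) ^ 5
  have hp : p = 0 := by
    apply Polynomial.eq_zero_of_infinite_isRoot
    apply (Set.Ioo_infinite hac).mono
    intro b hb
    have := H b hb
    simp only [Set.mem_ofPred_eq, IsRoot.def, p, eval_sub, eval_mul, eval_add, eval_pow, eval_C,
      eval_X]
    rw [this]
    ring
  have h0 : p.eval 0 = 0 := by rw [hp]; simp
  simp only [p, eval_sub, eval_mul, eval_add, eval_pow, eval_C, eval_X] at h0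
  have : a ^ 42 * ((5 / 7) ^ 5 * (2 / 7) ^ 7 - (1 / 8) ^ 5) = 0 := by
    rw [← h0]; ring
  have ha42 : a ^ 42 ≠ 0 := by positivity
  rcases mul_eq_zero.1 this with h | h
  · exact ha42 h
  · norm_num at h

/-- The function `x ↦ x^{5/2}` fails the identity `osc(f,I) = (1/4)|Df|(I)` on some
subinterval of any `(α, β)` with `0 < α < β`; equivalently, `s = 5/2` does not solve
`8s = (1+s)^{2+1/s}`, while `s = 1` does. -/
theorem x_pow_five_halves_not_solution :
    (∀ α β : ℝ, 0 < α → α < β →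
      ∃ x y, α < x ∧ x < y ∧ y < β ∧
        varD (fun t => t ^ ((5 : ℝ) / 2)) x y
          ≠ 4 * ENNReal.ofReal (oscI (fun t => t ^ ((5 : ℝ) / 2)) x y)) ∧
    (¬ (8 * ((5 : ℝ) / 2) = (1 + (5 : ℝ) / 2) ^ ((2 : ℝ) + 1 / ((5 : ℝ) / 2)))) ∧
    (8 * (1 : ℝ) = (1 + (1 : ℝ)) ^ ((2 : ℝ) + 1 / (1 : ℝ))) := by
  refine ⟨?_, ?_, ?_⟩
  · intro α β hα hαβ
    by_contra! hcon
    have hx : 0 < (α + β) / 2 := by linarith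
    have hsq : √((α + β) / 2) ^ 2 = (α + β) / 2 := Real.sq_sqrt hx.le
    have hlt : √((α + β) / 2) < √β := Real.sqrt_lt_sqrt hx.le (by linarith)
    refine aux_contra (√((α + β) / 2)) (√β) (Real.sqrt_pos.2 hx) hlt ?_
    intro b hb
    have ha := Real.sqrt_pos.2 hx
    have hb0 : 0 < b := ha.trans hb.1
    apply aux_poly _ b ha hb.1
    apply hcon
    · rw [hsq]; linarith
    · have := hb.1
      gcongr
    · exact (Real.lt_sqrt hb0.le).1 hb.2
  · intro h
    have h2 := congrArg (fun t : ℝ => t ^ 5) h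
    rw [← Real.rpow_natCast ((1 + (5 : ℝ) / 2) ^ _), ← Real.rpow_mul (by norm_num)] at h2
    have e : ((2 : ℝ) + 1 / ((5 : ℝ) / 2)) * ((5 : ℕ) : ℝ) = ((12 : ℕ) : ℝ) := by norm_num
    rw [e, Real.rpow_natCast] at h2
    norm_num at h2
  · have e : (2 : ℝ) + 1 / 1 = ((3 : ℕ) : ℝ) := by norm_num
    rw [e, Real.rpow_natCast]
    norm_num
end

section
/- Main theorem: let f : (a,b) → ℝ be locally integrable and suppose that for every nonempty open interval I compactly contained in (a,b) the identity osc(f,I) = (1/4)|Df|(I) holds. Then f equals an affine function almost everywhere on (a,b). -/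
open MeasureTheory Set Filter
open scoped ENNReal

open scoped Topology


/-- The reduced setting: `g` is continuous and strictly increasing with primitive `F`. -/
structure CoreH (g F : ℝ → ℝ) (p q : ℝ) : Prop where
  cont : Continuous g
  hF : ∀ t, HasDerivAt F (g t) t
  mono : StrictMonoOn g (Ioo p q)
  ident : ∀ x c y, p < x → x < c → c < y → y < q → g c * (y - x) = F y - F x →
    (y - x) * (g y - g x) = 8 * (g c * (c - x) - (F c - F x))

/-- `c` selects the points where `g` attains its mean over `(x, y)`. -/
def IsSel (g F : ℝ → ℝ) (x q : ℝ) (c : ℝ → ℝ) : Prop :=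
  ∀ y ∈ Ioo x q, c y ∈ Ioo x y ∧ g (c y) = (F y - F x) / (y - x)

theorem CoreH.exists_sel {g F : ℝ → ℝ} {p q : ℝ} (H : CoreH g F p q) (x : ℝ) :
    ∃ c, IsSel g F x q c := by
  have : ∀ y, ∃ c, y ∈ Ioo x q → (c ∈ Ioo x y ∧ g c = (F y - F x) / (y - x)) := by
    intro y
    by_cases hy : y ∈ Ioo x q
    · obtain ⟨c, hc, hc'⟩ := exists_hasDerivAt_eq_slope F g hy.1
        (fun t _ => (H.hF t).continuousAt.continuousWithinAt) (fun t _ => H.hF t)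
      exact ⟨c, fun _ => ⟨hc, hc'⟩⟩
    · exact ⟨0, fun h => absurd h hy⟩
  choose c hc using this
  exact ⟨c, hc⟩

theorem CoreH.tangent {g F : ℝ → ℝ} {p q : ℝ} (H : CoreH g F p q) {s t : ℝ}
    (hs : s ∈ Ioo p q) (ht : t ∈ Ioo p q) : g t * (s - t) ≤ F s - F t := by
  have hcF : Continuous F := continuous_iff_continuousAt.2 fun t => (H.hF t).continuousAt
  rcases lt_trichotomy s t with h | h | h
  · obtain ⟨c, hc, hc'⟩ := exists_hasDerivAt_eq_slope F g h hcF.continuousOn (fun t _ => H.hF t)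
    have : g c < g t := H.mono ⟨hs.1.trans hc.1, hc.2.trans ht.2⟩ ht hc.2
    rw [eq_div_iff (by linarith)] at hc'
    nlinarith [hc.1, hc.2]
  · subst h; simp
  · obtain ⟨c, hc, hc'⟩ := exists_hasDerivAt_eq_slope F g h hcF.continuousOn (fun t _ => H.hF t)
    have : g t < g c := H.mono ht ⟨ht.1.trans hc.1, hc.2.trans hs.2⟩ hc.1
    rw [eq_div_iff (by linarith)] at hc'
    nlinarith [hc.1, hc.2]

theorem CoreH.hasDerivAt_m {g F : ℝ → ℝ} {p q : ℝ} (H : CoreH g F p q) {x y : ℝ} (hxy : x < y) :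
    HasDerivAt (fun y => (F y - F x) / (y - x)) ((g y - (F y - F x) / (y - x)) / (y - x)) y := by
  have h1 : HasDerivAt (fun y => F y - F x) (g y) y := (H.hF y).sub_const _
  have h2 : HasDerivAt (fun y : ℝ => y - x) 1 y := (hasDerivAt_id y).sub_const _
  have hne : y - x ≠ 0 := by linarith
  refine (h1.div h2 hne).congr_deriv ?_
  field_simp

theorem CoreH.sel_cont {g F : ℝ → ℝ} {p q : ℝ} (H : CoreH g F p q) {x : ℝ} (hx : p < x)
    {c : ℝ → ℝ} (hc : IsSel g F x q c) {y : ℝ} (hy : y ∈ Ioo x q) : ContinuousAt c y := by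
  have hm := (H.hasDerivAt_m hy.1).continuousAt
  obtain ⟨hcy, hgc⟩ := hc y hy
  have hcJ : c y ∈ Ioo p q := ⟨hx.trans hcy.1, hcy.2.trans hy.2⟩
  have hev : ∀ᶠ z in 𝓝 y, z ∈ Ioo x q := isOpen_Ioo.mem_nhds hy
  refine tendsto_order.2 ⟨fun u hu => ?_, fun u hu => ?_⟩
  · set u' := max u ((x + c y) / 2) with hu'
    have h1 : u' < c y := max_lt hu (by linarith [hcy.1])
    have h2 : p < u' := lt_of_lt_of_le (by linarith [hcy.1]) (le_max_right _ _)
    have h3 : g u' < (F y - F x) / (y - x) := by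
      rw [← hgc]; exact H.mono ⟨h2, h1.trans hcJ.2⟩ hcJ h1
    filter_upwards [hev, hm.eventually (lt_mem_nhds h3)] with z hz hz'
    obtain ⟨hcz, hgz⟩ := hc z hz
    rw [← hgz] at hz'
    have := (H.mono.lt_iff_lt ⟨h2, h1.trans hcJ.2⟩ ⟨hx.trans hcz.1, hcz.2.trans hz.2⟩).1 hz'
    exact lt_of_le_of_lt (le_max_left _ _) this
  · set u' := min u ((q + c y) / 2) with hu'
    have h1 : c y < u' := lt_min hu (by linarith [hcJ.2])
    have h2 : u' < q := lt_of_le_of_lt (min_le_right _ _) (by linarith [hcJ.2])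
    have h3 : (F y - F x) / (y - x) < g u' := by
      rw [← hgc]; exact H.mono hcJ ⟨hcJ.1.trans h1, h2⟩ h1
    filter_upwards [hev, hm.eventually (gt_mem_nhds h3)] with z hz hz'
    obtain ⟨hcz, hgz⟩ := hc z hz
    rw [← hgz] at hz'
    have := (H.mono.lt_iff_lt ⟨hx.trans hcz.1, hcz.2.trans hz.2⟩ ⟨hcJ.1.trans h1, h2⟩).1 hz'
    exact lt_of_lt_of_le this (min_le_left _ _)

theorem CoreH.hasDerivAt_P {g F : ℝ → ℝ} {p q : ℝ} (H : CoreH g F p q) {x : ℝ} (hx : p < x)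
    {c : ℝ → ℝ} (hc : IsSel g F x q c) {y : ℝ} (hy : y ∈ Ioo x q) :
    HasDerivAt (fun y => (F y - F x) / (y - x) * (c y - x) - (F (c y) - F x))
      ((g y - (F y - F x) / (y - x)) / (y - x) * (c y - x)) y := by
  have hm := H.hasDerivAt_m hy.1
  have hcc := H.sel_cont hx hc hy
  set m : ℝ → ℝ := fun y => (F y - F x) / (y - x) with hmdef
  set m' := (g y - (F y - F x) / (y - x)) / (y - x)
  obtain ⟨hcy, hgc⟩ := hc y hy
  have hcJ : c y ∈ Ioo p q := ⟨hx.trans hcy.1, hcy.2.trans hy.2⟩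
  have hev : ∀ᶠ z in 𝓝 y, z ∈ Ioo x q := isOpen_Ioo.mem_nhds hy
  rw [hasDerivAt_iff_isLittleO]
  have e1 : (fun z => (m z - m y) * (c z - c y)) =o[𝓝 y] fun z => z - y := by
    have h1 : (fun z => m z - m y) =O[𝓝 y] fun z => z - y := hm.isBigO_sub
    have h2 : (fun z => c z - c y) =o[𝓝 y] fun _ => (1 : ℝ) := by
      rw [Asymptotics.isLittleO_one_iff]
      simpa using hcc.tendsto.sub_const (c y)
    simpa using h1.mul_isLittleO h2
  have e2 : (fun z => m z * (c z - x) - (F (c z) - F x) - (m y * (c y - x) - (F (c y) - F x))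
      - (m z - m y) * (c y - x)) =o[𝓝 y] fun z => z - y := by
    refine Asymptotics.IsBigO.trans_isLittleO (Asymptotics.IsBigO.of_bound 1 ?_) e1
    filter_upwards [hev] with z hz
    obtain ⟨hcz, hgz⟩ := hc z hz
    have hczJ : c z ∈ Ioo p q := ⟨hx.trans hcz.1, hcz.2.trans hz.2⟩
    have t1 := H.tangent hcJ hczJ
    have t2 := H.tangent hczJ hcJ
    have a1 : g (c z) = m z := hgz
    have a2 : g (c y) = m y := hgc
    rw [a1] at t1
    rw [a2] at t2
    rw [one_mul, Real.norm_eq_abs, Real.norm_eq_abs]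
    rw [abs_of_nonneg (by nlinarith)]
    refine le_trans ?_ (le_abs_self _)
    nlinarith
  have e3 := (hasDerivAt_iff_isLittleO.1 hm).const_mul_left (c y - x)
  refine (e2.add e3).congr_left fun z => ?_
  simp only [smul_eq_mul]
  ring

theorem CoreH.hasDerivAt_g {g F : ℝ → ℝ} {p q : ℝ} (H : CoreH g F p q) {x : ℝ} (hx : p < x)
    {c : ℝ → ℝ} (hc : IsSel g F x q c) {y : ℝ} (hy : y ∈ Ioo x q) :
    HasDerivAt g ((8 * ((g y - (F y - F x) / (y - x)) / (y - x) * (c y - x)) - (g y - g x))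
      / (y - x)) y := by
  have h1 := (H.hasDerivAt_P hx hc hy).const_mul 8
  have h2 : HasDerivAt (fun y : ℝ => y - x) 1 y := (hasDerivAt_id y).sub_const _
  have hne : y - x ≠ 0 := by linarith [hy.1]
  have key : ∀ z ∈ Ioo x q,
      g z = 8 * ((F z - F x) / (z - x) * (c z - x) - (F (c z) - F x)) / (z - x) + g x := by
    intro z hz
    obtain ⟨hcz, hgz⟩ := hc z hz
    have hne : z - x ≠ 0 := by linarith [hz.1]
    have := H.ident x (c z) z hx hcz.1 hcz.2 hz.2 (by rw [hgz]; field_simp)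
    rw [← hgz, ← this]; field_simp; ring
  have h3 := (h1.div h2 hne).add_const (g x)
  refine (h3.congr_of_eventuallyEq ?_).congr_deriv ?_
  · filter_upwards [isOpen_Ioo.mem_nhds hy] with z hz using key z hz
  · have := key y hy
    have h4 : 8 * ((F y - F x) / (y - x) * (c y - x) - (F (c y) - F x)) = (g y - g x) * (y - x) := by
      rw [this]; field_simp; ring
    rw [h4]; field_simp

theorem CoreH.exists_left {p y : ℝ} (h : p < y) : ∃ x, p < x ∧ x < y := exists_between h

theorem CoreH.contDiff_step {g F : ℝ → ℝ} {p q : ℝ} (H : CoreH g F p q)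
    (hpos : ∀ t ∈ Ioo p q, 0 < deriv g t) (n : ℕ) (hn : n ≠ 0)
    (hg : ContDiffOn ℝ n g (Ioo p q)) : ContDiffOn ℝ (n + 1 : ℕ) g (Ioo p q) := by
  push_cast
  rw [contDiffOn_succ_iff_deriv_of_isOpen isOpen_Ioo]
  refine ⟨hg.differentiableOn (by exact_mod_cast hn), by simp, ?_⟩
  intro y hy
  apply ContDiffAt.contDiffWithinAt
  obtain ⟨x, hpx, hxy⟩ := exists_between hy.1
  obtain ⟨c, hc⟩ := H.exists_sel x
  have hyx : y ∈ Ioo x q := ⟨hxy, hy.2⟩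
  have hne : y - x ≠ 0 := by linarith
  have hev : ∀ᶠ z in 𝓝 y, z ∈ Ioo x q := isOpen_Ioo.mem_nhds hyx
  have hgy : ContDiffAt ℝ n g y := hg.contDiffAt (isOpen_Ioo.mem_nhds hy)
  have hFy : ContDiffAt ℝ n F y := by
    have : ContDiff ℝ 1 F := by
      rw [contDiff_one_iff_deriv]
      refine ⟨fun t => (H.hF t).differentiableAt, ?_⟩
      have : deriv F = g := funext fun t => (H.hF t).deriv
      rw [this]; exact H.cont
    have hF' : ContDiffOn ℝ ((n : WithTop ℕ∞) + 1) F (Ioo p q) := by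
      rw [contDiffOn_succ_iff_deriv_of_isOpen isOpen_Ioo]
      refine ⟨fun t _ => (H.hF t).differentiableAt.differentiableWithinAt, by simp, ?_⟩
      have : deriv F = g := funext fun t => (H.hF t).deriv
      rw [this]; exact hg
    exact (hF'.contDiffAt (isOpen_Ioo.mem_nhds hy)).of_le le_self_add
  have hid : ContDiffAt ℝ n (fun z : ℝ => z - x) y := contDiffAt_id.sub contDiffAt_const
  have hm : ContDiffAt ℝ n (fun z => (F z - F x) / (z - x)) y :=
    (hFy.sub contDiffAt_const).div hid hne
  obtain ⟨hcy, hgc⟩ := hc y hyx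
  have hcJ : c y ∈ Ioo p q := ⟨hpx.trans hcy.1, hcy.2.trans hyx.2⟩
  have hgcy : ContDiffAt ℝ n g (c y) := hg.contDiffAt (isOpen_Ioo.mem_nhds hcJ)
  have hn' : (n : WithTop ℕ∞) ≠ 0 := by exact_mod_cast hn
  have hcc : ContDiffAt ℝ n c y := by
    have hd : HasDerivAt g (deriv g (c y)) (c y) :=
      (hgcy.differentiableAt hn').hasDerivAt
    have hd0 : deriv g (c y) ≠ 0 := (hpos _ hcJ).ne'
    have hfd : HasFDerivAt g
        ((ContinuousLinearEquiv.unitsEquivAut ℝ (Units.mk0 _ hd0) : ℝ ≃L[ℝ] ℝ) : ℝ →L[ℝ] ℝ) (c y) := by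
      have heq : ((ContinuousLinearEquiv.unitsEquivAut ℝ (Units.mk0 _ hd0) : ℝ ≃L[ℝ] ℝ) :
          ℝ →L[ℝ] ℝ) = ContinuousLinearMap.toSpanSingleton ℝ (deriv g (c y)) := by
        ext; simp
      rw [heq]
      exact hd.hasFDerivAt
    have hinv := hgcy.to_localInverse hfd hn'
    have hleft : ∀ᶠ z in 𝓝 (c y), hgcy.localInverse hfd hn' (g z) = z :=
      (hgcy.hasStrictFDerivAt' hfd hn').eventually_left_inverse
    have hcomp : ContDiffAt ℝ n (fun z => hgcy.localInverse hfd hn' ((F z - F x) / (z - x))) y := by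
      rw [hgc] at hinv
      exact hinv.comp y hm
    refine hcomp.congr_of_eventuallyEq ?_
    filter_upwards [hev, (H.sel_cont hpx hc hyx).eventually hleft] with z hz hz'
    rw [← (hc z hz).2, hz']
  have hform : ContDiffAt ℝ n (fun y => (8 * ((g y - (F y - F x) / (y - x)) / (y - x) * (c y - x))
      - (g y - g x)) / (y - x)) y :=
    ((contDiffAt_const.mul (((hgy.sub hm).div hid hne).mul (hcc.sub contDiffAt_const))).sub
      (hgy.sub contDiffAt_const)).div hid hne
  refine hform.congr_of_eventuallyEq ?_
  filter_upwards [hev] with z hz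
  exact (H.hasDerivAt_g hpx hc hz).deriv

theorem CoreH.contDiff_one {g F : ℝ → ℝ} {p q : ℝ} (H : CoreH g F p q) :
    ContDiffOn ℝ 1 g (Ioo p q) := by
  rw [show (1 : WithTop ℕ∞) = 0 + 1 by simp, contDiffOn_succ_iff_deriv_of_isOpen isOpen_Ioo]
  refine ⟨?_, by simp, ?_⟩
  · intro y hy
    obtain ⟨x, hpx, hxy⟩ := exists_between hy.1
    obtain ⟨c, hc⟩ := H.exists_sel x
    exact (H.hasDerivAt_g hpx hc ⟨hxy, hy.2⟩).differentiableAt.differentiableWithinAt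
  · rw [contDiffOn_zero]
    intro y hy
    apply ContinuousAt.continuousWithinAt
    obtain ⟨x, hpx, hxy⟩ := exists_between hy.1
    obtain ⟨c, hc⟩ := H.exists_sel x
    have hyx : y ∈ Ioo x q := ⟨hxy, hy.2⟩
    have hne : y - x ≠ 0 := by linarith
    have hev : ∀ᶠ z in 𝓝 y, z ∈ Ioo x q := isOpen_Ioo.mem_nhds hyx
    have hgy : ContinuousAt g y := H.cont.continuousAt
    have hid : ContinuousAt (fun z : ℝ => z - x) y := by fun_prop
    have hm := (H.hasDerivAt_m hxy).continuousAt
    have hcc := H.sel_cont hpx hc hyx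
    have hform : ContinuousAt (fun y => (8 * ((g y - (F y - F x) / (y - x)) / (y - x) * (c y - x))
      - (g y - g x)) / (y - x)) y :=
      ((continuousAt_const.mul (((hgy.sub hm).div hid hne).mul (hcc.sub continuousAt_const))).sub
      (hgy.sub continuousAt_const)).div hid hne
    refine hform.congr ?_
    filter_upwards [hev] with z hz
    exact (H.hasDerivAt_g hpx hc hz).deriv.symm

theorem tendsto_addpos (t : ℝ) : Tendsto (fun h : ℝ => t + h) (𝓝[>] 0) (𝓝 t) := by
  have : ContinuousAt (fun h : ℝ => t + h) 0 := by fun_prop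
  simpa using this.tendsto.mono_left nhdsWithin_le_nhds

theorem tendsto_subpos (t : ℝ) : Tendsto (fun h : ℝ => t - h) (𝓝[>] 0) (𝓝 t) := by
  have : ContinuousAt (fun h : ℝ => t - h) 0 := by fun_prop
  simpa using this.tendsto.mono_left nhdsWithin_le_nhds

theorem symm_quot {k : ℝ → ℝ} {k' t : ℝ} (hk : HasDerivAt k k' t) :
    Tendsto (fun h => (k (t + h) - k (t - h)) / h) (𝓝[>] 0) (𝓝 (2 * k')) := by
  have h1 : HasDerivAt (fun h => k (t + h)) k' 0 := by
    apply HasDerivAt.comp_const_add; simpa using hk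
  have h2 : HasDerivAt (fun h => k (t - h)) (-k') 0 := by
    apply HasDerivAt.comp_const_sub; simpa using hk
  have h3 := (h1.sub h2).tendsto_slope_zero_right
  refine (h3.congr' ?_).trans (by rw [show k' - -k' = 2 * k' by ring])
  filter_upwards with h
  simp [div_eq_inv_mul]

theorem lim_D {F g g1 g2 : ℝ → ℝ} {g3 t : ℝ} (hF : ∀ s, HasDerivAt F (g s) s)
    (hg : ∀ᶠ s in 𝓝 t, HasDerivAt g (g1 s) s) (hg1 : ∀ᶠ s in 𝓝 t, HasDerivAt g1 (g2 s) s)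
    (hg2 : HasDerivAt g2 g3 t) :
    Tendsto (fun h => (2 * h * (g (t + h) - g (t - h)) - 4 * (F (t + h) + F (t - h) - 2 * F t))
      / h ^ 4) (𝓝[>] 0) (𝓝 (g3 / 3)) := by
  have ap := tendsto_addpos t
  have am := tendsto_subpos t
  have cF : ContinuousAt F t := (hF t).continuousAt
  have cg : ContinuousAt g t := hg.self_of_nhds.continuousAt
  have cg1 : ContinuousAt g1 t := hg1.self_of_nhds.continuousAt
  have th : Tendsto (fun h : ℝ => h) (𝓝[>] 0) (𝓝 0) := tendsto_id.mono_left nhdsWithin_le_nhds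
  have hpos : ∀ᶠ h : ℝ in 𝓝[>] 0, 0 < h := self_mem_nhdsWithin
  have l2 : Tendsto (fun h => (2 * h * (g1 (t + h) + g1 (t - h)) - 2 * (g (t + h) - g (t - h)))
      / (4 * h ^ 3)) (𝓝[>] 0) (𝓝 (g3 / 3)) := by
    refine HasDerivAt.lhopital_zero_nhdsGT (f' := fun h => 2 * h * (g2 (t + h) - g2 (t - h)))
      (g' := fun h => 12 * h ^ 2) ?_ ?_ ?_ ?_ ?_ ?_
    · filter_upwards [ap.eventually hg, am.eventually hg, ap.eventually hg1, am.eventually hg1]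
        with h a1 a2 a3 a4
      have b1 := HasDerivAt.comp_const_add t h a1
      have b2 := HasDerivAt.comp_const_sub t h a2
      have b3 := HasDerivAt.comp_const_add t h a3
      have b4 := HasDerivAt.comp_const_sub t h a4
      refine ((((hasDerivAt_id h).const_mul 2).mul (b3.add b4)).sub
        ((b1.sub b2).const_mul 2)).congr_deriv ?_
      simp
      left; ring
    · filter_upwards with h
      refine ((hasDerivAt_pow 3 h).const_mul 4).congr_deriv ?_
      norm_num; ring
    · filter_upwards [hpos] with h hh
      positivity
    · have := ((th.const_mul 2).mul ((cg1.tendsto.comp ap).add (cg1.tendsto.comp am))).sub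
        (((cg.tendsto.comp ap).sub (cg.tendsto.comp am)).const_mul 2)
      simpa using this
    · simpa using (th.pow 3).const_mul 4
    · have := (symm_quot hg2).const_mul (1 / 6)
      rw [show 1 / 6 * (2 * g3) = g3 / 3 by ring] at this
      refine this.congr' ?_
      filter_upwards [hpos] with h hh
      field_simp; ring
  refine HasDerivAt.lhopital_zero_nhdsGT
    (f' := fun h => 2 * h * (g1 (t + h) + g1 (t - h)) - 2 * (g (t + h) - g (t - h)))
    (g' := fun h => 4 * h ^ 3) ?_ ?_ ?_ ?_ ?_ l2
  · filter_upwards [ap.eventually hg, am.eventually hg] with h a1 a2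
    have b1 := HasDerivAt.comp_const_add t h a1
    have b2 := HasDerivAt.comp_const_sub t h a2
    have b3 := HasDerivAt.comp_const_add t h (hF _)
    have b4 := HasDerivAt.comp_const_sub t h (hF _)
    refine ((((hasDerivAt_id h).const_mul 2).mul (b1.sub b2)).sub
        (((b3.add b4).sub_const (2 * F t)).const_mul 4)).congr_deriv ?_
    simp
    ring
  · filter_upwards with h
    refine (hasDerivAt_pow 4 h).congr_deriv ?_
    norm_num
  · filter_upwards [hpos] with h hh
    positivity
  · have := ((th.const_mul 2).mul ((cg.tendsto.comp ap).sub (cg.tendsto.comp am))).sub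
        ((((cF.tendsto.comp ap).add (cF.tendsto.comp am)).sub_const (2 * F t)).const_mul 4)
    refine (this.trans ?_)
    apply le_of_eq; congr 1; ring
  · simpa using th.pow 4

theorem lim_m {F g g1 : ℝ → ℝ} {g2 t : ℝ} (hF : ∀ s, HasDerivAt F (g s) s)
    (hg : ∀ᶠ s in 𝓝 t, HasDerivAt g (g1 s) s) (hg1 : HasDerivAt g1 g2 t) :
    Tendsto (fun h => (F (t + h) - F (t - h) - 2 * h * g t) / (2 * h ^ 3))
      (𝓝[>] 0) (𝓝 (g2 / 6)) := by
  have ap := tendsto_addpos t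
  have am := tendsto_subpos t
  have cF : ContinuousAt F t := (hF t).continuousAt
  have cg : ContinuousAt g t := hg.self_of_nhds.continuousAt
  have th : Tendsto (fun h : ℝ => h) (𝓝[>] 0) (𝓝 0) := tendsto_id.mono_left nhdsWithin_le_nhds
  have hpos : ∀ᶠ h : ℝ in 𝓝[>] 0, 0 < h := self_mem_nhdsWithin
  have l2 : Tendsto (fun h => (g (t + h) + g (t - h) - 2 * g t) / (6 * h ^ 2))
      (𝓝[>] 0) (𝓝 (g2 / 6)) := by
    refine HasDerivAt.lhopital_zero_nhdsGT (f' := fun h => g1 (t + h) - g1 (t - h))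
      (g' := fun h => 12 * h) ?_ ?_ ?_ ?_ ?_ ?_
    · filter_upwards [ap.eventually hg, am.eventually hg] with h a1 a2
      have b1 := HasDerivAt.comp_const_add t h a1
      have b2 := HasDerivAt.comp_const_sub t h a2
      refine ((b1.add b2).sub_const (2 * g t)).congr_deriv ?_
      ring
    · filter_upwards with h
      refine ((hasDerivAt_pow 2 h).const_mul 6).congr_deriv ?_
      norm_num; ring
    · filter_upwards [hpos] with h hh
      positivity
    · have := ((cg.tendsto.comp ap).add (cg.tendsto.comp am)).sub_const (2 * g t)
      refine (this.trans ?_)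
      apply le_of_eq; congr 1; ring
    · simpa using (th.pow 2).const_mul 6
    · have := (symm_quot hg1).const_mul (1 / 12)
      rw [show 1 / 12 * (2 * g2) = g2 / 6 by ring] at this
      refine this.congr' ?_
      filter_upwards [hpos] with h hh
      field_simp
  refine HasDerivAt.lhopital_zero_nhdsGT (f' := fun h => g (t + h) + g (t - h) - 2 * g t)
    (g' := fun h => 6 * h ^ 2) ?_ ?_ ?_ ?_ ?_ l2
  · filter_upwards with h
    have b3 := HasDerivAt.comp_const_add t h (hF _)
    have b4 := HasDerivAt.comp_const_sub t h (hF _)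
    refine ((b3.sub b4).sub (((hasDerivAt_id h).const_mul 2).mul_const (g t))).congr_deriv ?_
    simp
  · filter_upwards with h
    refine ((hasDerivAt_pow 3 h).const_mul 2).congr_deriv ?_
    norm_num; ring
  · filter_upwards [hpos] with h hh
    positivity
  · have := ((cF.tendsto.comp ap).sub (cF.tendsto.comp am)).sub ((th.const_mul 2).mul_const (g t))
    simpa using this
  · simpa using (th.pow 3).const_mul 2

theorem lim_R {F g : ℝ → ℝ} {g1 t : ℝ} (hF : ∀ s, HasDerivAt F (g s) s)
    (hg : HasDerivAt g g1 t) :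
    Tendsto (fun s => (F s - F t - g t * (s - t)) / (s - t) ^ 2) (𝓝[≠] t) (𝓝 (g1 / 2)) := by
  have cF : ContinuousAt F t := (hF t).continuousAt
  have hne : ∀ᶠ s in 𝓝[≠] t, s ≠ t := self_mem_nhdsWithin
  refine HasDerivAt.lhopital_zero_nhdsNE (f' := fun s => g s - g t)
    (g' := fun s => 2 * (s - t)) ?_ ?_ ?_ ?_ ?_ ?_
  · filter_upwards with s
    refine (((hF s).sub_const (F t)).sub
      (((hasDerivAt_id s).sub_const t).const_mul (g t))).congr_deriv ?_
    simp
  · filter_upwards with s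
    refine (((hasDerivAt_id s).sub_const t).pow 2).congr_deriv ?_
    simp
  · filter_upwards [hne] with s hs
    simpa [sub_eq_zero] using hs
  · have : ContinuousAt (fun s => F s - F t - g t * (s - t)) t := by fun_prop
    simpa using this.tendsto.mono_left nhdsWithin_le_nhds
  · have : ContinuousAt (fun s : ℝ => (s - t) ^ 2) t := by fun_prop
    simpa using this.tendsto.mono_left nhdsWithin_le_nhds
  · have := (hasDerivAt_iff_tendsto_slope.1 hg).const_mul (1 / 2)
    rw [show 1 / 2 * g1 = g1 / 2 by ring] at this
    refine this.congr' ?_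
    filter_upwards [hne] with s hs
    have : s - t ≠ 0 := sub_ne_zero.2 hs
    rw [slope_def_field]; field_simp

theorem CoreH.ode {g F g1 g2 : ℝ → ℝ} {g3 p q t : ℝ} (H : CoreH g F p q) (ht : t ∈ Ioo p q)
    (hg : ∀ᶠ s in 𝓝 t, HasDerivAt g (g1 s) s) (hg1 : ∀ᶠ s in 𝓝 t, HasDerivAt g1 (g2 s) s)
    (hg2 : HasDerivAt g2 g3 t) (hpos : 0 < g1 t) : 3 * (g1 t * g3) = g2 t ^ 2 := by
  have ap := tendsto_addpos t
  have am := tendsto_subpos t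
  have th : Tendsto (fun h : ℝ => h) (𝓝[>] 0) (𝓝 0) := tendsto_id.mono_left nhdsWithin_le_nhds
  have hp : ∀ᶠ h : ℝ in 𝓝[>] 0, 0 < h := self_mem_nhdsWithin
  have LD := lim_D H.hF hg hg1 hg2
  have LM := lim_m H.hF hg hg1.self_of_nhds
  have LR := lim_R H.hF hg.self_of_nhds
  -- choose the mean-value points
  have hex : ∀ h : ℝ, ∃ c, 0 < h → (c ∈ Ioo (t - h) (t + h) ∧
      g c = (F (t + h) - F (t - h)) / (t + h - (t - h))) := by
    intro h
    by_cases hh : 0 < h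
    · obtain ⟨c, hc, hc'⟩ := exists_hasDerivAt_eq_slope F g (show t - h < t + h by linarith)
        (fun t _ => (H.hF t).continuousAt.continuousWithinAt) (fun t _ => H.hF t)
      exact ⟨c, fun _ => ⟨hc, hc'⟩⟩
    · exact ⟨0, fun h => absurd h hh⟩
  choose c hc using hex
  have hct : Tendsto c (𝓝[>] 0) (𝓝 t) := by
    refine tendsto_of_tendsto_of_tendsto_of_le_of_le' am ap ?_ ?_
    · filter_upwards [hp] with h hh using (hc h hh).1.1.le
    · filter_upwards [hp] with h hh using (hc h hh).1.2.le
  set r : ℝ → ℝ := dslope g t with hr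
  have hrc : Tendsto r (𝓝 t) (𝓝 (g1 t)) := by
    have hd := hg.self_of_nhds
    have : ContinuousAt (dslope g t) t := continuousAt_dslope_same.2 hd.differentiableAt
    have h2 := this.tendsto
    rwa [dslope_same, hd.deriv] at h2
  set R : ℝ → ℝ := Function.update (fun s => (F s - F t - g t * (s - t)) / (s - t) ^ 2) t (g1 t / 2)
    with hR
  have hRc : Tendsto R (𝓝 t) (𝓝 (g1 t / 2)) := by
    have : ContinuousAt R t := by
      rw [hR, continuousAt_update_same]; exact LR
    have h2 := this.tendsto
    rwa [hR, Function.update_self] at h2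
  have Rid : ∀ s, F s - F t - g t * (s - t) = R s * (s - t) ^ 2 := by
    intro s
    by_cases hs : s = t
    · subst hs; simp
    · have : s - t ≠ 0 := sub_ne_zero.2 hs
      rw [hR, Function.update_of_ne hs]; field_simp
  have rid : ∀ s, g s - g t = r s * (s - t) := by
    intro s
    have := sub_smul_dslope g t s
    rw [smul_eq_mul] at this
    rw [← this, hr]; ring
  have hr' := hrc.comp hct
  have hR' := hRc.comp hct
  have L2 := (((hr'.sub hR').div (hr'.pow 2) (by positivity)).mul (LM.pow 2)).const_mul 8
  have hJp : ∀ᶠ h in 𝓝[>] (0 : ℝ), t + h ∈ Ioo p q := ap.eventually (isOpen_Ioo.mem_nhds ht)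
  have hJm : ∀ᶠ h in 𝓝[>] (0 : ℝ), t - h ∈ Ioo p q := am.eventually (isOpen_Ioo.mem_nhds ht)
  have hrne : ∀ᶠ h in 𝓝[>] (0 : ℝ), r (c h) ≠ 0 :=
    hr'.eventually (isOpen_ne.mem_nhds hpos.ne')
  have hlim := tendsto_nhds_unique LD (L2.congr' (by
    filter_upwards [hp, hJp, hJm, hrne] with h hh h1 h2 h3
    obtain ⟨hc1, hc2⟩ := hc h hh
    have hm : g (c h) * (t + h - (t - h)) = F (t + h) - F (t - h) := by
      rw [hc2]; exact div_mul_cancel₀ _ (by intro h0; linarith)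
    have hid := H.ident _ _ _ h2.1 hc1.1 hc1.2 h1.2 hm
    have e1 := rid (c h)
    have e2 := Rid (c h)
    simp only [Function.comp, Pi.div_apply]
    have hnum : F (t + h) - F (t - h) - 2 * h * g t = 2 * h * (r (c h) * (c h - t)) := by
      rw [← hm, ← e1]; ring
    have hD : 2 * h * (g (t + h) - g (t - h)) - 4 * (F (t + h) + F (t - h) - 2 * F t)
        = 8 * ((r (c h) - R (c h)) * (c h - t) ^ 2) := by
      have e3 : g (c h) = g t + r (c h) * (c h - t) := by linarith
      have e4 : F (c h) = F t + g t * (c h - t) + R (c h) * (c h - t) ^ 2 := by linarith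
      have e5 : F (t + h) = F (t - h) + g (c h) * (t + h - (t - h)) := by linarith
      rw [e5]
      rw [e4] at hid
      rw [e3] at hid ⊢
      linear_combination hid
    rw [hnum, hD]
    field_simp))
  field_simp at hlim
  nlinarith

theorem exists_const_of_hasDerivAt_zero {k : ℝ → ℝ} {p q : ℝ}
    (hk : ∀ t ∈ Ioo p q, HasDerivAt k 0 t) : ∃ a, ∀ t ∈ Ioo p q, k t = a :=
  isOpen_Ioo.exists_is_const_of_deriv_eq_zero isPreconnected_Ioo
    (fun t ht => (hk t ht).differentiableAt.differentiableWithinAt) (fun t ht => (hk t ht).deriv)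

theorem CoreH.restrict {g F : ℝ → ℝ} {p q p' q' : ℝ} (H : CoreH g F p q) (hp : p ≤ p')
    (hq : q' ≤ q) : CoreH g F p' q' where
  cont := H.cont
  hF := H.hF
  mono := H.mono.mono (Ioo_subset_Ioo hp hq)
  ident := fun x c y h1 h2 h3 h4 h5 =>
    H.ident x c y (lt_of_le_of_lt hp h1) h2 h3 (lt_of_lt_of_le h4 hq) h5

theorem no_power {σ : ℝ → ℝ} {g F : ℝ → ℝ} {A B D E p q : ℝ} (H : CoreH g F p q) (hpq : p < q)
    (hA : A ≠ 0) (hσ : ∀ t ∈ Ioo p q, 0 < σ t) (hσ2 : ∀ t ∈ Ioo p q, σ t ^ 2 = A * t + B)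
    (hg : ∀ t ∈ Ioo p q, g t = 2 / (5 * A) * σ t ^ 5 + D)
    (hFf : ∀ t ∈ Ioo p q, F t = 4 / (35 * A ^ 2) * σ t ^ 7 + D * t + E) : False := by
  obtain ⟨y, hpy, hyq⟩ := exists_between hpq
  have hy : y ∈ Ioo p q := ⟨hpy, hyq⟩
  set v := σ y with hv
  have hv0 : 0 < v := hσ y hy
  have key : ∀ x ∈ Ioo p y, 49 ^ 6 * ((v ^ 2 - σ x ^ 2) ^ 2 * (v ^ 5 - σ x ^ 5) + 16 / 7 *
      ((v ^ 7 - σ x ^ 7) * σ x ^ 2 - σ x ^ 7 * (v ^ 2 - σ x ^ 2))) ^ 5 * (v ^ 2 - σ x ^ 2) ^ 2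
      = 4 * 80 ^ 5 * (v ^ 7 - σ x ^ 7) ^ 7 := by
    intro x hx
    have hxJ : x ∈ Ioo p q := ⟨hx.1, hx.2.trans hyq⟩
    obtain ⟨c, hc, hc'⟩ := exists_hasDerivAt_eq_slope F g hx.2
        (fun t _ => (H.hF t).continuousAt.continuousWithinAt) (fun t _ => H.hF t)
    have hcJ : c ∈ Ioo p q := ⟨hx.1.trans hc.1, hc.2.trans hyq⟩
    have hm : g c * (y - x) = F y - F x := by
      rw [hc']; exact div_mul_cancel₀ _ (by linarith [hx.2])
    have hid := H.ident x c y hx.1 hc.1 hc.2 hyq hm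
    rw [hg c hcJ, hFf y hy, hFf x hxJ] at hm
    rw [hg c hcJ, hg y hy, hg x hxJ, hFf c hcJ, hFf x hxJ] at hid
    have sx := hσ2 x hxJ
    have sy := hσ2 y hy
    have sc := hσ2 c hcJ
    have ex : x = (σ x ^ 2 - B) / A := by rw [sx]; field_simp; ring
    have ey : y = (v ^ 2 - B) / A := by rw [sy]; field_simp; ring
    have ec : c = (σ c ^ 2 - B) / A := by rw [sc]; field_simp; ring
    have hxy : v ^ 2 - σ x ^ 2 ≠ 0 := by
      rw [hv, sx, sy]
      have : A * y + B - (A * x + B) = A * (y - x) := by ring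
      rw [this]
      exact mul_ne_zero hA (by linarith [hx.2])
    rw [← hv] at hm hid
    have hyx : y - x = (v ^ 2 - σ x ^ 2) / A := by
      rw [eq_div_iff hA]; linear_combination sx - sy
    have hcx : c - x = (σ c ^ 2 - σ x ^ 2) / A := by
      rw [eq_div_iff hA]; linear_combination sx - sc
    have hu0 := hσ x hxJ
    have hγ0 := hσ c hcJ
    set u := σ x
    set γ := σ c
    have m1 : γ ^ 5 * (v ^ 2 - u ^ 2) = 2 / 7 * (v ^ 7 - u ^ 7) := by
      have : 2 / (5 * A) * γ ^ 5 * (y - x) = 4 / (35 * A ^ 2) * (v ^ 7 - u ^ 7) := by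
        linear_combination hm
      rw [hyx] at this
      field_simp at this
      linear_combination 1 / 70 * this
    have m2 : (v ^ 2 - u ^ 2) * (v ^ 5 - u ^ 5)
        = 8 * (γ ^ 5 * (γ ^ 2 - u ^ 2) - 2 / 7 * (γ ^ 7 - u ^ 7)) := by
      have : (y - x) * (2 / (5 * A) * (v ^ 5 - u ^ 5)) = 8 * (2 / (5 * A) * γ ^ 5 * (c - x)
          - 4 / (35 * A ^ 2) * (γ ^ 7 - u ^ 7)) := by
        linear_combination hid
      rw [hyx, hcx] at this
      field_simp at this
      linear_combination 1 / 70 * this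
    have m3 : (v ^ 2 - u ^ 2) ^ 2 * (v ^ 5 - u ^ 5) + 16 / 7 *
      ((v ^ 7 - u ^ 7) * u ^ 2 - u ^ 7 * (v ^ 2 - u ^ 2)) = 80 / 49 * (v ^ 7 - u ^ 7) * γ ^ 2 := by
      linear_combination (v ^ 2 - u ^ 2) * m2 + (40 / 7 * γ ^ 2 - 8 * u ^ 2) * m1
    rw [m3]
    linear_combination 4 * 80 ^ 5 * (49 / 4) * (v ^ 7 - u ^ 7) ^ 5
      * (γ ^ 5 * (v ^ 2 - u ^ 2) + 2 / 7 * (v ^ 7 - u ^ 7)) * m1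
  open Polynomial in
  let Q : ℝ[X] := C (49 ^ 6) * ((C (v ^ 2) - X ^ 2) ^ 2 * (C (v ^ 5) - X ^ 5) + C (16 / 7) *
      ((C (v ^ 7) - X ^ 7) * X ^ 2 - X ^ 7 * (C (v ^ 2) - X ^ 2))) ^ 5 * (C (v ^ 2) - X ^ 2) ^ 2
      - C (4 * 80 ^ 5) * (C (v ^ 7) - X ^ 7) ^ 7
  have hQe : ∀ u, Q.eval u = 49 ^ 6 * ((v ^ 2 - u ^ 2) ^ 2 * (v ^ 5 - u ^ 5) + 16 / 7 *
      ((v ^ 7 - u ^ 7) * u ^ 2 - u ^ 7 * (v ^ 2 - u ^ 2))) ^ 5 * (v ^ 2 - u ^ 2) ^ 2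
      - 4 * 80 ^ 5 * (v ^ 7 - u ^ 7) ^ 7 := by
    intro u
    simp only [Q, Polynomial.eval_sub, Polynomial.eval_mul, Polynomial.eval_add,
      Polynomial.eval_pow, Polynomial.eval_C, Polynomial.eval_X]
  have hQ0 : Q = 0 := by
    apply Polynomial.eq_zero_of_infinite_isRoot
    have hinj : InjOn σ (Ioo p y) := by
      intro s hs t ht hst
      have h1 := hσ2 s ⟨hs.1, hs.2.trans hyq⟩
      have h2 := hσ2 t ⟨ht.1, ht.2.trans hyq⟩
      rw [hst, h2] at h1
      have : A * t = A * s := by linarith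
      exact (mul_left_cancel₀ hA this).symm
    refine ((Ioo_infinite hpy).image hinj).mono ?_
    rintro _ ⟨x, hx, rfl⟩
    show Q.eval (σ x) = 0
    rw [hQe, key x hx, sub_self]
  have h0 := hQe 0
  rw [hQ0, Polynomial.eval_zero] at h0
  have : v ^ 49 * (49 ^ 6 - 4 * 80 ^ 5) = 0 := by rw [h0]; ring
  have hv49 : v ^ 49 ≠ 0 := by positivity
  rcases mul_eq_zero.1 this with h | h
  · exact hv49 h
  · norm_num at h

theorem CoreH.deriv_const_of_pos {g F : ℝ → ℝ} {p q : ℝ} (H : CoreH g F p q)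
    (hpos : ∀ t ∈ Ioo p q, 0 < deriv g t) : ∃ a, ∀ t ∈ Ioo p q, deriv g t = a := by
  by_cases hpq : p < q
  swap
  · exact ⟨0, fun t ht => absurd (ht.1.trans ht.2) hpq⟩
  have hC1 := H.contDiff_one
  have hC2 := H.contDiff_step hpos 1 one_ne_zero (by exact_mod_cast hC1)
  have hC3 := H.contDiff_step hpos 2 two_ne_zero hC2
  have hd1 : ∀ t ∈ Ioo p q, HasDerivAt g (deriv g t) t := fun t ht =>
    ((hC1.differentiableOn (by simp) t ht).differentiableAt (isOpen_Ioo.mem_nhds ht)).hasDerivAt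
  have hC3' : ContDiffOn ℝ ((1 + 1) + 1) g (Ioo p q) := by exact_mod_cast hC3
  have hC2' := ((contDiffOn_succ_iff_deriv_of_isOpen isOpen_Ioo).1 hC3').2.2
  have hd2 : ∀ t ∈ Ioo p q, HasDerivAt (deriv g) (deriv (deriv g) t) t := fun t ht =>
    ((hC2'.differentiableOn (by norm_num) t ht).differentiableAt
      (isOpen_Ioo.mem_nhds ht)).hasDerivAt
  have hC1' := ((contDiffOn_succ_iff_deriv_of_isOpen isOpen_Ioo).1 hC2').2.2
  have hd3 : ∀ t ∈ Ioo p q, HasDerivAt (deriv (deriv g)) (deriv (deriv (deriv g)) t) t :=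
    fun t ht => ((hC1'.differentiableOn (by norm_num) t ht).differentiableAt
      (isOpen_Ioo.mem_nhds ht)).hasDerivAt
  set g1 := deriv g
  set g2 := deriv g1
  set g3 := deriv g2
  have hode : ∀ t ∈ Ioo p q, 3 * (g1 t * g3 t) = g2 t ^ 2 := by
    intro t ht
    refine H.ode ht ?_ ?_ (hd3 t ht) (hpos t ht)
    · filter_upwards [isOpen_Ioo.mem_nhds ht] with s hs using hd1 s hs
    · filter_upwards [isOpen_Ioo.mem_nhds ht] with s hs using hd2 s hs
  set σ : ℝ → ℝ := fun t => g1 t ^ (1 / 3 : ℝ) with hσdef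
  have hσ0 : ∀ t ∈ Ioo p q, 0 < σ t := fun t ht => Real.rpow_pos_of_pos (hpos t ht) _
  have hσ3 : ∀ t ∈ Ioo p q, σ t ^ 3 = g1 t := by
    intro t ht
    rw [hσdef]
    simp only
    rw [← Real.rpow_natCast, ← Real.rpow_mul (hpos t ht).le]
    norm_num
  have hσd : ∀ t ∈ Ioo p q, HasDerivAt σ (g2 t / (3 * σ t ^ 2)) t := by
    intro t ht
    have h1 := (hd2 t ht).rpow_const (p := 1 / 3) (Or.inl (hpos t ht).ne')
    refine h1.congr_deriv ?_
    have h2 : g1 t ^ ((1 : ℝ) / 3 - 1) = (σ t ^ 2)⁻¹ := by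
      rw [hσdef]
      simp only
      rw [← Real.rpow_natCast, ← Real.rpow_mul (hpos t ht).le, ← Real.rpow_neg (hpos t ht).le]
      norm_num
    rw [h2]
    have := (hσ0 t ht).ne'
    field_simp
  obtain ⟨k, hk⟩ : ∃ a, ∀ t ∈ Ioo p q, g2 t / (3 * σ t) = a := by
    apply exists_const_of_hasDerivAt_zero
    intro t ht
    have h0 := (hσ0 t ht).ne'
    refine ((hd3 t ht).div ((hσd t ht).const_mul 3) (by positivity)).congr_deriv ?_
    have h1 := hode t ht
    rw [← hσ3 t ht] at h1
    change (g3 t * (3 * σ t) - g2 t * (3 * (g2 t / (3 * σ t ^ 2)))) / (3 * σ t) ^ 2 = 0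
    field_simp
    linear_combination h1
  obtain ⟨B, hB⟩ : ∃ a, ∀ t ∈ Ioo p q, σ t ^ 2 - 2 * k * t = a := by
    apply exists_const_of_hasDerivAt_zero
    intro t ht
    have h0 := (hσ0 t ht).ne'
    refine (((hσd t ht).pow 2).sub ((hasDerivAt_id t).const_mul (2 * k))).congr_deriv ?_
    rw [← hk t ht]
    simp only [Nat.cast_ofNat]
    field_simp
    simp
  by_cases hk0 : k = 0
  · refine ⟨g1 ((p + q) / 2), fun t ht => ?_⟩
    have hmid : (p + q) / 2 ∈ Ioo p q := ⟨by linarith, by linarith⟩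
    have e1 := hB t ht
    have e2 := hB _ hmid
    rw [hk0] at e1 e2
    have e3 : σ t ^ 2 = σ ((p + q) / 2) ^ 2 := by linarith
    have e4 : σ t = σ ((p + q) / 2) :=
      (sq_eq_sq₀ (hσ0 t ht).le (hσ0 _ hmid).le).1 e3
    rw [← hσ3 t ht, ← hσ3 _ hmid, e4]
  · exfalso
    have hA : 2 * k ≠ 0 := by simpa using hk0
    have hσd' : ∀ t ∈ Ioo p q, HasDerivAt σ (k / σ t) t := by
      intro t ht
      have h0 := (hσ0 t ht).ne'
      refine (hσd t ht).congr_deriv ?_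
      rw [← hk t ht]; field_simp
    obtain ⟨D, hD⟩ : ∃ a, ∀ t ∈ Ioo p q, g t - 2 / (5 * (2 * k)) * σ t ^ 5 = a := by
      apply exists_const_of_hasDerivAt_zero
      intro t ht
      have h0 := (hσ0 t ht).ne'
      refine ((hd1 t ht).sub (((hσd' t ht).pow 5).const_mul (2 / (5 * (2 * k))))).congr_deriv ?_
      rw [← hσ3 t ht]
      push_cast
      field_simp
      norm_num
    obtain ⟨E, hE⟩ : ∃ a, ∀ t ∈ Ioo p q, F t - 4 / (35 * (2 * k) ^ 2) * σ t ^ 7 - D * t = a := by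
      apply exists_const_of_hasDerivAt_zero
      intro t ht
      have h0 := (hσ0 t ht).ne'
      refine (((H.hF t).sub (((hσd' t ht).pow 7).const_mul (4 / (35 * (2 * k) ^ 2)))).sub
        ((hasDerivAt_id t).const_mul D)).congr_deriv ?_
      rw [← hD t ht]
      push_cast
      field_simp
      ring
    refine no_power H hpq hA hσ0 (B := B) (D := D) (E := E) ?_ ?_ ?_
    · intro t ht; linarith [hB t ht]
    · intro t ht; linarith [hD t ht]
    · intro t ht; linarith [hE t ht]

theorem CoreH.affine {g F : ℝ → ℝ} {p q : ℝ} (H : CoreH g F p q) :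
    ∃ α β, ∀ t ∈ Ioo p q, g t = α * t + β := by
  have hC1 := H.contDiff_one
  have hd1 : ∀ t ∈ Ioo p q, HasDerivAt g (deriv g t) t := fun t ht =>
    ((hC1.differentiableOn (by simp) t ht).differentiableAt (isOpen_Ioo.mem_nhds ht)).hasDerivAt
  have hcd : ContinuousOn (deriv g) (Ioo p q) := hC1.continuousOn_deriv_of_isOpen isOpen_Ioo le_rfl
  suffices h : ∃ a, ∀ t ∈ Ioo p q, deriv g t = a by
    obtain ⟨a, ha⟩ := h
    obtain ⟨β, hβ⟩ : ∃ b, ∀ t ∈ Ioo p q, g t - a * t = b := by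
      apply exists_const_of_hasDerivAt_zero
      intro t ht
      refine ((hd1 t ht).sub ((hasDerivAt_id t).const_mul a)).congr_deriv ?_
      rw [ha t ht]; simp
    exact ⟨a, β, fun t ht => by linarith [hβ t ht]⟩
  by_cases hz : ∃ t0 ∈ Ioo p q, 0 < deriv g t0
  swap
  · push Not at hz
    refine ⟨0, fun t ht => le_antisymm (hz t ht) ?_⟩
    have h1 := H.mono.monotoneOn.derivWithin_nonneg (x := t)
    rwa [derivWithin_of_isOpen isOpen_Ioo ht] at h1
  obtain ⟨t0, ht0, hpos0⟩ := hz
  refine ⟨deriv g t0, ?_⟩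
  -- local constancy near positive points
  have hloc : ∀ t ∈ Ioo p q, 0 < deriv g t → ∀ᶠ s in 𝓝 t, deriv g s = deriv g t := by
    intro t ht hp
    have hev : ∀ᶠ s in 𝓝 t, s ∈ Ioo p q ∧ 0 < deriv g s :=
      Eventually.and (isOpen_Ioo.mem_nhds ht)
        ((hcd.continuousAt (isOpen_Ioo.mem_nhds ht)).eventually (lt_mem_nhds hp))
    obtain ⟨ε, hε, hb⟩ := Metric.eventually_nhds_iff.1 hev
    have hin : ∀ s ∈ Ioo (t - ε) (t + ε), s ∈ Ioo p q ∧ 0 < deriv g s := by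
      intro s hs
      apply hb
      rw [Real.dist_eq, abs_lt]
      constructor <;> linarith [hs.1, hs.2]
    have H' : CoreH g F (max p (t - ε)) (min q (t + ε)) :=
      H.restrict (le_max_left _ _) (min_le_left _ _)
    obtain ⟨a, ha⟩ := H'.deriv_const_of_pos (fun s hs =>
      (hin s ⟨lt_of_le_of_lt (le_max_right _ _) hs.1,
        lt_of_lt_of_le hs.2 (min_le_right _ _)⟩).2)
    have htm : t ∈ Ioo (max p (t - ε)) (min q (t + ε)) :=
      ⟨max_lt ht.1 (by linarith), lt_min ht.2 (by linarith)⟩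
    filter_upwards [isOpen_Ioo.mem_nhds htm] with s hs
    rw [ha s hs, ha t htm]
  have hsub : Ioo p q ⊆ {t | ∀ᶠ s in 𝓝 t, deriv g s = deriv g t0} := by
    apply isPreconnected_Ioo.subset_of_closure_inter_subset
    · rw [isOpen_iff_eventually]
      intro t ht
      exact eventually_eventually_nhds.2 ht
    · exact ⟨t0, ht0, hloc t0 ht0 hpos0⟩
    · rintro t ⟨htc, ht⟩
      have heq : deriv g t = deriv g t0 := by
        have hcl : t ∈ closure ({s | deriv g s = deriv g t0}) :=
          closure_mono (fun s hs => Eventually.self_of_nhds hs) htc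
        by_contra hne
        have h1 : ∀ᶠ s in 𝓝 t, deriv g s ≠ deriv g t0 :=
          (hcd.continuousAt (isOpen_Ioo.mem_nhds ht)).eventually (isOpen_ne.mem_nhds hne)
        obtain ⟨s, hs1, hs2⟩ := ((mem_closure_iff_frequently.1 hcl).and_eventually h1).exists
        exact hs2 hs1
      have := hloc t ht (heq ▸ hpos0)
      rw [heq] at this
      exact this
  intro t ht
  have h := hsub ht
  rw [mem_ofPred_eq] at h
  exact h.self_of_nhds

/-- Admissible test functions. -/
def TestF (φ : ℝ → ℝ) (x y : ℝ) : Prop :=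
  ContDiff ℝ (⊤ : ℕ∞) φ ∧ HasCompactSupport φ ∧ tsupport φ ⊆ Set.Ioo x y ∧ ∀ t, |φ t| ≤ 1

theorem TestF.support_deriv {φ : ℝ → ℝ} {x y : ℝ} (h : TestF φ x y) :
    Function.support (deriv φ) ⊆ Ioo x y :=
  support_deriv_subset.trans h.2.2.1

theorem TestF.int_eq {φ : ℝ → ℝ} {x y : ℝ} (h : TestF φ x y) (f : ℝ → ℝ) :
    ∫ t in x..y, f t * deriv φ t = ∫ t, f t * deriv φ t := by
  apply intervalIntegral.integral_eq_integral_of_support_subset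
  intro t ht
  have : deriv φ t ≠ 0 := fun h0 => ht (by simp [h0])
  exact Ioo_subset_Ioc_self (h.support_deriv this)

theorem TestF.le_varD {φ : ℝ → ℝ} {x y : ℝ} (h : TestF φ x y) (f : ℝ → ℝ) :
    ENNReal.ofReal (∫ t, f t * deriv φ t) ≤ varD f x y := by
  rw [← h.int_eq f]
  exact le_iSup (fun φ : {φ : ℝ → ℝ // ContDiff ℝ (⊤ : ℕ∞) φ ∧ HasCompactSupport φ ∧
      tsupport φ ⊆ Set.Ioo x y ∧ ∀ t, |φ t| ≤ 1} =>
    ENNReal.ofReal (∫ t in x..y, f t * deriv (φ : ℝ → ℝ) t)) ⟨φ, h⟩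

theorem testF_zero (x y : ℝ) : TestF (fun _ => 0) x y := by
  refine ⟨contDiff_const, HasCompactSupport.zero, ?_, by simp⟩
  have : tsupport (fun _ : ℝ => (0:ℝ)) = ∅ := by
    rw [tsupport_eq_empty_iff]; rfl
  rw [this]; exact empty_subset _

theorem TestF.mono {φ : ℝ → ℝ} {x y x' y' : ℝ} (h : TestF φ x y) (hx : x' ≤ x) (hy : y ≤ y') :
    TestF φ x' y' :=
  ⟨h.1, h.2.1, h.2.2.1.trans (Ioo_subset_Ioo hx hy), h.2.2.2⟩

theorem TestF.neg {φ : ℝ → ℝ} {x y : ℝ} (h : TestF φ x y) : TestF (-φ) x y := by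
  refine ⟨h.1.neg, h.2.1.neg, ?_, by simpa using h.2.2.2⟩
  rw [tsupport_neg]; exact h.2.2.1

theorem TestF.add {φ ψ : ℝ → ℝ} {x y z : ℝ} (h : TestF φ x y) (h' : TestF ψ y z)
    (hxy : x ≤ y) (hyz : y ≤ z) : TestF (φ + ψ) x z := by
  refine ⟨h.1.add h'.1, h.2.1.add h'.2.1, ?_, ?_⟩
  · refine (tsupport_add φ ψ).trans (union_subset ?_ ?_)
    · exact h.2.2.1.trans (Ioo_subset_Ioo le_rfl hyz)
    · exact h'.2.2.1.trans (Ioo_subset_Ioo hxy le_rfl)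
  · intro t
    rcases le_total t y with ht | ht
    · have : ψ t = 0 := by
        by_contra h0
        have := h'.2.2.1 (subset_tsupport _ h0)
        exact absurd this.1 (not_lt.2 ht)
      simpa [this] using h.2.2.2 t
    · have : φ t = 0 := by
        by_contra h0
        have := h.2.2.1 (subset_tsupport _ h0)
        exact absurd this.2 (not_lt.2 ht)
      simpa [this] using h'.2.2.2 t

theorem TestF.integrable {φ : ℝ → ℝ} {x y : ℝ} (h : TestF φ x y) {f : ℝ → ℝ}
    (hf : LocallyIntegrable f) : Integrable (fun t => f t * deriv φ t) := by
  have hc : Continuous (deriv φ) := h.1.continuous_deriv (by simp)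
  have := hf.integrable_smul_right_of_hasCompactSupport hc h.2.1.deriv
  simpa using this

theorem varD_le {f : ℝ → ℝ} {x y : ℝ} {C : ℝ≥0∞}
    (h : ∀ φ, TestF φ x y → ENNReal.ofReal (∫ t, f t * deriv φ t) ≤ C) : varD f x y ≤ C := by
  refine iSup_le ?_
  rintro ⟨φ, hφ⟩
  have := h φ hφ
  rwa [← TestF.int_eq hφ f] at this

theorem varD_mono {f : ℝ → ℝ} {x y x' y' : ℝ} (hx : x' ≤ x) (hy : y ≤ y') :
    varD f x y ≤ varD f x' y' :=
  varD_le fun _ h => (h.mono hx hy).le_varD f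

theorem varD_super {f : ℝ → ℝ} (hf : LocallyIntegrable f) {x y z : ℝ} (hxy : x ≤ y)
    (hyz : y ≤ z) : varD f x y + varD f y z ≤ varD f x z := by
  have hne : ∀ x y : ℝ, Nonempty {φ : ℝ → ℝ // ContDiff ℝ (⊤ : ℕ∞) φ ∧ HasCompactSupport φ ∧
      tsupport φ ⊆ Set.Ioo x y ∧ ∀ t, |φ t| ≤ 1} := fun x y => ⟨⟨_, testF_zero x y⟩⟩
  have := hne x y
  have := hne y z
  refine ENNReal.iSup_add_iSup_le ?_
  rintro ⟨φ, hφ⟩ ⟨ψ, hψ⟩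
  change TestF φ x y at hφ
  change TestF ψ y z at hψ
  simp only
  rw [hφ.int_eq, hψ.int_eq]
  rcases le_total (∫ t, f t * deriv φ t) 0 with h1 | h1
  · rw [ENNReal.ofReal_of_nonpos h1, zero_add]
    exact (hψ.mono hxy le_rfl).le_varD f
  rcases le_total (∫ t, f t * deriv ψ t) 0 with h2 | h2
  · rw [ENNReal.ofReal_of_nonpos h2, add_zero]
    exact (hφ.mono le_rfl hyz).le_varD f
  rw [← ENNReal.ofReal_add h1 h2, ← integral_add (hφ.integrable hf) (hψ.integrable hf)]
  convert (hφ.add hψ hxy hyz).le_varD f using 3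
  funext t
  have d1 : DifferentiableAt ℝ φ t := (hφ.1.differentiable (by simp)) t
  have d2 : DifferentiableAt ℝ ψ t := (hψ.1.differentiable (by simp)) t
  rw [deriv_add d1 d2]; ring

theorem ae_of_ae_interval {f g : ℝ → ℝ} {x y : ℝ} (hxy : x ≤ y)
    (h : ∀ᵐ t, t ∈ Ioo x y → f t = g t) : ∀ᵐ t, t ∈ Set.uIoc x y → f t = g t := by
  rw [uIoc_of_le hxy]
  have hy : ∀ᵐ t : ℝ, t ≠ y := by simp [ae_iff]
  filter_upwards [h, hy] with t ht hty hm
  exact ht ⟨hm.1, lt_of_le_of_ne hm.2 hty⟩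

theorem varD_congr {f g : ℝ → ℝ} {x y : ℝ} (hxy : x ≤ y)
    (h : ∀ᵐ t, t ∈ Ioo x y → f t = g t) : varD f x y = varD g x y := by
  unfold varD
  congr 1
  funext φ
  congr 1
  apply intervalIntegral.integral_congr_ae
  filter_upwards [ae_of_ae_interval hxy h] with t ht hm
  rw [ht hm]

theorem oscI_congr {f g : ℝ → ℝ} {x y : ℝ} (hxy : x ≤ y)
    (h : ∀ᵐ t, t ∈ Ioo x y → f t = g t) : oscI f x y = oscI g x y := by
  unfold oscI
  have h1 : ∫ s in x..y, f s = ∫ s in x..y, g s := by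
    apply intervalIntegral.integral_congr_ae
    exact ae_of_ae_interval hxy h
  rw [h1]
  congr 1
  apply intervalIntegral.integral_congr_ae
  filter_upwards [ae_of_ae_interval hxy h] with t ht hm
  rw [ht hm]

/-- A bump sequence. -/
noncomputable def bumpS (n : ℕ) : ContDiffBump (0 : ℝ) where
  rIn := 1 / ((n : ℝ) + 2)
  rOut := 2 / ((n : ℝ) + 2)
  rIn_pos := by positivity
  rIn_lt_rOut := by
    apply div_lt_div_of_pos_right (by norm_num) (by positivity)

theorem bumpS_tendsto : Tendsto (fun n => (bumpS n).rOut) atTop (𝓝 0) := by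
  show Tendsto (fun n : ℕ => 2 / ((n : ℝ) + 2)) atTop (𝓝 0)
  have h1 : Tendsto (fun n : ℕ => (n : ℝ) + 2) atTop atTop :=
    tendsto_atTop_add_const_right _ _ tendsto_natCast_atTop_atTop
  exact tendsto_const_nhds.div_atTop h1

/-- Convolution with the bump. -/
noncomputable def convS (f : ℝ → ℝ) (n : ℕ) (s : ℝ) : ℝ :=
  ∫ τ, f τ * (bumpS n).normed volume (τ - s)

theorem convS_eq (f : ℝ → ℝ) (n : ℕ) (s : ℝ) :
    convS f n s = (MeasureTheory.convolution ((bumpS n).normed volume) f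
      (ContinuousLinearMap.lsmul ℝ ℝ) volume) s := by
  rw [convolution_lsmul_swap, convS]
  congr 1
  funext τ
  rw [smul_eq_mul, mul_comm, ← (bumpS n).normed_neg, neg_sub]

theorem convS_ae {f : ℝ → ℝ} (hf : LocallyIntegrable f) :
    ∀ᵐ s, Tendsto (fun n => convS f n s) atTop (𝓝 (f s)) := by
  have := ContDiffBump.ae_convolution_tendsto_right_of_locallyIntegrable (K := 2) bumpS_tendsto
    (Eventually.of_forall fun n => by
      show 2 / ((n : ℝ) + 2) ≤ 2 * (1 / ((n : ℝ) + 2))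
      rw [mul_one_div]) hf
  filter_upwards [this] with s hs
  simpa only [convS_eq] using hs

theorem convS_cont {f : ℝ → ℝ} (hf : Continuous f) (s : ℝ) :
    Tendsto (fun n => convS f n s) atTop (𝓝 (f s)) := by
  have := ContDiffBump.convolution_tendsto_right_of_continuous (μ := volume) bumpS_tendsto hf s
  simpa only [convS_eq] using this

theorem conv_le_varD {f : ℝ → ℝ} (hf : LocallyIntegrable f) {n : ℕ} {x y s t : ℝ}
    (hs : x + (bumpS n).rOut < s) (hst : s ≤ t) (ht : t + (bumpS n).rOut < y) :
    ENNReal.ofReal |convS f n s - convS f n t| ≤ varD f x y := by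
  set ρ := (bumpS n).normed volume with hρ
  set r := (bumpS n).rOut with hr
  have hr0 : 0 < r := (bumpS n).rOut_pos
  have hρc : Continuous ρ := (bumpS n).continuous_normed
  have hρ0 : ∀ u, 0 ≤ ρ u := (bumpS n).nonneg_normed
  have hρs : ∀ u, r ≤ |u| → ρ u = 0 := by
    intro u hu
    by_contra h0
    have : u ∈ Function.support ρ := h0
    rw [hρ, (bumpS n).support_normed_eq, Metric.mem_ball, dist_zero_right, Real.norm_eq_abs] at this
    exact absurd this (not_lt.2 hu)
  have hρi : ∫ u, ρ u = 1 := (bumpS n).integral_normed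
  have hρint : Integrable ρ := (bumpS n).integrable_normed
  set R : ℝ → ℝ := fun τ => ∫ u in (-r)..τ, ρ u with hR
  have hRd : ∀ τ, HasDerivAt R (ρ τ) τ := fun τ =>
    intervalIntegral.integral_hasDerivAt_right (hρc.intervalIntegrable _ _)
      (hρc.stronglyMeasurableAtFilter _ _) hρc.continuousAt
  have hRd' : deriv R = ρ := funext fun τ => (hRd τ).deriv
  have hRs : ContDiff ℝ (⊤ : ℕ∞) R := by
    rw [contDiff_infty_iff_deriv, hRd']
    exact ⟨fun τ => (hRd τ).differentiableAt, (bumpS n).contDiff_normed⟩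
  have hR0 : ∀ τ ≤ -r, R τ = 0 := by
    intro τ hτ
    simp only [hR]
    rw [intervalIntegral.integral_congr (g := fun _ => (0:ℝ))]
    · simp
    · intro u hu
      rw [uIcc_of_ge hτ] at hu
      apply hρs
      rw [abs_of_nonpos (by linarith [hu.2])]; linarith [hu.2]
  have hR1 : ∀ τ, r ≤ τ → R τ = 1 := by
    intro τ hτ
    simp only [hR]
    rw [← hρi]
    apply intervalIntegral.integral_eq_integral_of_support_subset
    intro u hu
    have : |u| < r := by
      by_contra h; exact hu (hρs u (not_lt.1 h))
    rw [abs_lt] at this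
    exact ⟨this.1, by linarith⟩
  have hRm : Monotone R := monotone_of_deriv_nonneg (fun τ => (hRd τ).differentiableAt)
    (by rw [hRd']; exact hρ0)
  have hRb0 : ∀ τ, 0 ≤ R τ := by
    intro τ
    rcases le_total τ (-r) with h | h
    · rw [hR0 τ h]
    · rw [← hR0 (-r) le_rfl]; exact hRm h
  have hRb1 : ∀ τ, R τ ≤ 1 := by
    intro τ
    rcases le_total τ r with h | h
    · rw [← hR1 r le_rfl]; exact hRm h
    · rw [hR1 τ h]
  set ψ : ℝ → ℝ := fun τ => R (τ - s) - R (τ - t) with hψ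
  have hψd : ∀ τ, HasDerivAt ψ (ρ (τ - s) - ρ (τ - t)) τ := fun τ =>
    ((hRd (τ - s)).comp_sub_const τ s).sub ((hRd (τ - t)).comp_sub_const τ t)
  have hsup : Function.support ψ ⊆ Icc (s - r) (t + r) := by
    intro τ hτ
    by_contra hc
    apply hτ
    rw [mem_Icc, not_and_or, not_le, not_le] at hc
    simp only [hψ]
    rcases hc with hc | hc
    · rw [hR0 _ (by linarith), hR0 _ (by linarith), sub_zero]
    · rw [hR1 _ (by linarith), hR1 _ (by linarith), sub_self]
  have htsup : tsupport ψ ⊆ Icc (s - r) (t + r) := closure_minimal hsup isClosed_Icc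
  have hT : TestF ψ x y := by
    refine ⟨?_, ?_, ?_, ?_⟩
    · exact (hRs.comp (contDiff_id.sub contDiff_const)).sub
        (hRs.comp (contDiff_id.sub contDiff_const))
    · exact IsCompact.of_isClosed_subset isCompact_Icc (isClosed_tsupport _) htsup
    · exact htsup.trans (Icc_subset_Ioo (by linarith) (by linarith))
    · intro τ
      simp only [hψ]
      rw [abs_le]
      constructor <;> linarith [hRb0 (τ - s), hRb0 (τ - t), hRb1 (τ - s), hRb1 (τ - t)]
  have hfi : ∀ s, Integrable (fun τ => f τ * ρ (τ - s)) := by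
    intro s
    have hcs : HasCompactSupport (fun τ => ρ (τ - s)) := by
      apply HasCompactSupport.of_support_subset_isCompact (isCompact_Icc (a := s - r) (b := s + r))
      intro τ hτ
      have : |τ - s| < r := by
        by_contra h; exact hτ (hρs _ (not_lt.1 h))
      rw [abs_lt] at this
      exact ⟨by linarith, by linarith⟩
    have := hf.integrable_smul_right_of_hasCompactSupport
      (show Continuous (fun τ => ρ (τ - s)) by fun_prop) hcs
    simpa using this
  have hIntg : ∫ τ, f τ * deriv ψ τ = convS f n s - convS f n t := by
    rw [convS, convS, ← integral_sub (hfi s) (hfi t)]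
    congr 1
    funext τ
    rw [(hψd τ).deriv]; ring
  have hIntg' : ∫ τ, f τ * deriv (-ψ) τ = -(convS f n s - convS f n t) := by
    rw [← hIntg, ← integral_neg]
    congr 1
    funext τ
    rw [deriv.neg]; ring
  rcases abs_choice (convS f n s - convS f n t) with h | h <;> rw [h]
  · rw [← hIntg]; exact hT.le_varD f
  · rw [← hIntg']; exact hT.neg.le_varD f

theorem lim_le_varD {f : ℝ → ℝ} (hf : LocallyIntegrable f) {x y s t : ℝ}
    (hs : s ∈ Ioo x y) (ht : t ∈ Ioo x y)
    (Ls : Tendsto (fun n => convS f n s) atTop (𝓝 (f s)))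
    (Lt : Tendsto (fun n => convS f n t) atTop (𝓝 (f t))) :
    ENNReal.ofReal |f s - f t| ≤ varD f x y := by
  wlog hst : s ≤ t generalizing s t
  · rw [abs_sub_comm]; exact this ht hs Lt Ls (le_of_not_ge hst)
  have hl : Tendsto (fun n => ENNReal.ofReal |convS f n s - convS f n t|) atTop
      (𝓝 (ENNReal.ofReal |f s - f t|)) :=
    (ENNReal.continuous_ofReal.tendsto _).comp (Ls.sub Lt).abs
  refine le_of_tendsto hl ?_
  have h1 := bumpS_tendsto.eventually_lt_const (show 0 < s - x by linarith [hs.1])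
  have h2 := bumpS_tendsto.eventually_lt_const (show 0 < y - t by linarith [ht.2])
  filter_upwards [h1, h2] with n h1 h2
  exact conv_le_varD hf (by linarith) hst (by linarith)

theorem varD_ge_of_cont {g : ℝ → ℝ} (hg : Continuous g) {x y : ℝ} (hxy : x < y) :
    ENNReal.ofReal |g y - g x| ≤ varD g x y := by
  have L : Tendsto (fun h : ℝ => ENNReal.ofReal |g (y - h) - g (x + h)|) (𝓝[>] 0)
      (𝓝 (ENNReal.ofReal |g y - g x|)) := by
    refine (ENNReal.continuous_ofReal.tendsto _).comp (Tendsto.abs (Tendsto.sub ?_ ?_))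
    · exact (hg.tendsto y).comp (tendsto_subpos y)
    · exact (hg.tendsto x).comp (tendsto_addpos x)
  refine le_of_tendsto L ?_
  have : Ioo (0:ℝ) (y - x) ∈ 𝓝[>] (0:ℝ) := Ioo_mem_nhdsGT (by linarith)
  filter_upwards [this] with h hh
  have h1 := hh.1
  have h2 := hh.2
  exact lim_le_varD hg.locallyIntegrable ⟨by linarith, by linarith⟩ ⟨by linarith, by linarith⟩
    (convS_cont hg _) (convS_cont hg _)

theorem varD_le_of_mono {g : ℝ → ℝ} {K : NNReal} (hg : LipschitzWith K g) {x y : ℝ} (hxy : x < y)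
    (hm : MonotoneOn g (Icc x y)) : varD g x y ≤ ENNReal.ofReal (g y - g x) := by
  apply varD_le
  intro φ hφ
  apply ENNReal.ofReal_le_ofReal
  rw [← hφ.int_eq g]
  have ag : AbsolutelyContinuousOnInterval g x y :=
    (hg.lipschitzOnWith (s := uIcc x y)).absolutelyContinuousOnInterval
  have aφ : AbsolutelyContinuousOnInterval φ x y := by
    apply ContDiffOn.absolutelyContinuousOnInterval
    exact (hφ.1.of_le (by simp)).contDiffOn
  have hx0 : φ x = 0 := by
    by_contra h0
    have := hφ.2.2.1 (subset_tsupport _ h0)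
    exact lt_irrefl _ this.1
  have hy0 : φ y = 0 := by
    by_contra h0
    have := hφ.2.2.1 (subset_tsupport _ h0)
    exact lt_irrefl _ this.2
  rw [ag.integral_mul_deriv_eq_deriv_mul aφ, hx0, hy0, ← ag.integral_deriv_eq_sub]
  simp only [mul_zero, sub_self, zero_sub]
  rw [← intervalIntegral.integral_neg]
  apply intervalIntegral.integral_mono_on_of_le_Ioo hxy.le
  · exact (ag.intervalIntegrable_deriv.mul_continuousOn aφ.continuousOn).neg
  · exact ag.intervalIntegrable_deriv
  · intro t ht
    have hd : 0 ≤ deriv g t := by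
      rw [← derivWithin_of_mem_nhds (Icc_mem_nhds ht.1 ht.2)]
      exact hm.derivWithin_nonneg
    have := hφ.2.2.2 t
    rw [abs_le] at this
    nlinarith [this.1]

theorem oscI_nonneg (f : ℝ → ℝ) {x y : ℝ} (hxy : x ≤ y) : 0 ≤ oscI f x y := by
  unfold oscI
  apply mul_nonneg (inv_nonneg.2 (by linarith))
  exact intervalIntegral.integral_nonneg hxy fun _ _ => abs_nonneg _

theorem oscI_self (f : ℝ → ℝ) (x : ℝ) : oscI f x x = 0 := by simp [oscI]

/-- The Lipschitz identity. -/
structure GH (g : ℝ → ℝ) (p q : ℝ) : Prop where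
  lip : ∃ K, LipschitzWith K g
  hid : ∀ x y, p < x → x < y → y < q → varD g x y = 4 * ENNReal.ofReal (oscI g x y)

/-- The weak consequences. -/
structure WH (g : ℝ → ℝ) (p q : ℝ) : Prop where
  cont : Continuous g
  V : ∀ x y, p < x → x ≤ y → y < q → |g y - g x| ≤ 4 * oscI g x y
  S : ∀ x y z, p < x → x ≤ y → y ≤ z → z < q → oscI g x y + oscI g y z ≤ oscI g x z

theorem four_ofReal (r : ℝ) : 4 * ENNReal.ofReal r = ENNReal.ofReal (4 * r) := by
  rw [ENNReal.ofReal_mul (by norm_num)]; norm_num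

theorem GH.wh {g : ℝ → ℝ} {p q : ℝ} (H : GH g p q) : WH g p q := by
  obtain ⟨K, hK⟩ := H.lip
  have hc := hK.continuous
  refine ⟨hc, ?_, ?_⟩
  · intro x y hx hxy hy
    rcases hxy.eq_or_lt with rfl | hxy
    · simp [oscI_self]
    have := varD_ge_of_cont hc hxy
    rw [H.hid x y hx hxy hy, four_ofReal] at this
    exact (ENNReal.ofReal_le_ofReal_iff (by linarith [oscI_nonneg g hxy.le])).1 this
  · intro x y z hx hxy hyz hz
    rcases hxy.eq_or_lt with rfl | hxy
    · simp [oscI_self]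
    rcases hyz.eq_or_lt with rfl | hyz
    · simp [oscI_self]
    have := varD_super hc.locallyIntegrable hxy.le hyz.le
    have o1 := oscI_nonneg g hxy.le
    have o2 := oscI_nonneg g hyz.le
    have o3 := oscI_nonneg g (hxy.trans hyz).le
    rw [H.hid x y hx hxy (hyz.trans hz), H.hid y z (hx.trans hxy) hyz hz,
      H.hid x z hx (hxy.trans hyz) hz, four_ofReal, four_ofReal, four_ofReal,
      ← ENNReal.ofReal_add (by linarith) (by linarith),
      ENNReal.ofReal_le_ofReal_iff (by linarith)] at this
    linarith

theorem oscI_neg (g : ℝ → ℝ) (x y : ℝ) : oscI (-g) x y = oscI g x y := by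
  unfold oscI
  congr 1
  apply intervalIntegral.integral_congr
  intro t _
  simp only [Pi.neg_apply, intervalIntegral.integral_neg]
  rw [← abs_neg]
  congr 1
  ring

theorem varD_neg (g : ℝ → ℝ) (x y : ℝ) : varD (-g) x y = varD g x y := by
  have key : ∀ g : ℝ → ℝ, varD (-g) x y ≤ varD g x y := by
    intro g
    apply varD_le
    intro φ hφ
    refine le_trans (le_of_eq ?_) (hφ.neg.le_varD g)
    congr 2
    funext t
    rw [deriv.neg]; simp
  apply le_antisymm (key g)
  simpa using key (-g)

theorem GH.neg {g : ℝ → ℝ} {p q : ℝ} (H : GH g p q) : GH (-g) p q := by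
  obtain ⟨K, hK⟩ := H.lip
  refine ⟨⟨K, hK.neg⟩, ?_⟩
  intro x y hx hxy hy
  rw [varD_neg, oscI_neg]; exact H.hid x y hx hxy hy

theorem oscI_refl (g : ℝ → ℝ) (x y : ℝ) : oscI (fun t => g (-t)) (-y) (-x) = oscI g x y := by
  unfold oscI
  have e : -x - -y = y - x := by ring
  have h1 : ∫ s in (-y)..(-x), g (-s) = ∫ s in x..y, g s := by
    rw [intervalIntegral.integral_comp_neg]; simp
  rw [e, h1]
  congr 1
  have := intervalIntegral.integral_comp_neg (a := -y) (b := -x)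
    (fun t => |g t - (y - x)⁻¹ * ∫ s in x..y, g s|)
  simpa using this

theorem WH.refl {g : ℝ → ℝ} {p q : ℝ} (H : WH g p q) : WH (fun t => g (-t)) (-q) (-p) := by
  refine ⟨H.cont.comp continuous_neg, ?_, ?_⟩
  · intro x y hx hxy hy
    have := H.V (-y) (-x) (by linarith) (by linarith) (by linarith)
    rw [← oscI_refl, neg_neg, neg_neg] at this
    rw [abs_sub_comm]; exact this
  · intro x y z hx hxy hyz hz
    have := H.S (-z) (-y) (-x) (by linarith) (by linarith) (by linarith) (by linarith)
    rw [← oscI_refl g (-z), ← oscI_refl g (-y), ← oscI_refl g (-z), neg_neg, neg_neg, neg_neg] at this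
    linarith

theorem oscI_le_two {g : ℝ → ℝ} (hg : Continuous g) {x y : ℝ} (hxy : x < y) (k : ℝ) :
    oscI g x y ≤ 2 * ((y - x)⁻¹ * ∫ t in x..y, |g t - k|) := by
  have hL : 0 < y - x := by linarith
  unfold oscI
  set m := (y - x)⁻¹ * ∫ s in x..y, g s with hm
  have h1 : |m - k| * (y - x) ≤ ∫ t in x..y, |g t - k| := by
    have e : (m - k) * (y - x) = ∫ t in x..y, (g t - k) := by
      rw [intervalIntegral.integral_sub (hg.intervalIntegrable _ _) (by simp), hm]
      simp; field_simp
    calc |m - k| * (y - x) = |(m - k) * (y - x)| := by rw [abs_mul, abs_of_pos hL]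
      _ ≤ _ := by rw [e]; exact intervalIntegral.abs_integral_le_integral_abs hxy.le
  have h2 : ∫ t in x..y, |g t - m| ≤ ∫ t in x..y, (|g t - k| + |m - k|) := by
    apply intervalIntegral.integral_mono_on hxy.le
    · exact Continuous.intervalIntegrable (by fun_prop) _ _
    · exact Continuous.intervalIntegrable (by fun_prop) _ _
    · intro t _
      have := abs_sub (g t - k) (m - k)
      rwa [sub_sub_sub_cancel_right] at this
  rw [intervalIntegral.integral_add (Continuous.intervalIntegrable (by fun_prop) _ _) (by simp)] at h2
  simp only [intervalIntegral.integral_const, smul_eq_mul] at h2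
  have h3 : ∫ t in x..y, |g t - m| ≤ 2 * ∫ t in x..y, |g t - k| := by linarith
  calc _ ≤ (y - x)⁻¹ * (2 * ∫ t in x..y, |g t - k|) :=
        mul_le_mul_of_nonneg_left h3 (inv_nonneg.2 hL.le)
    _ = _ := by ring

theorem WH.flat_step {g : ℝ → ℝ} {p q : ℝ} (H : WH g p q) {x z y k : ℝ} (hx : p < x) (hxz : x < z)
    (hk : ∀ t ∈ Icc x z, g t = k) (hzy : z ≤ y) (hy : y < q) (hs : 8 * (y - z) < z - x) :
    g y = k := by
  obtain ⟨u, hu, hmax⟩ := isCompact_Icc.exists_isMaxOn (nonempty_Icc.2 hzy)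
    (show ContinuousOn (fun t => |g t - k|) (Icc z y) from
      ((H.cont.sub continuous_const).abs).continuousOn)
  set R := |g u - k| with hR
  have hmax' : ∀ t ∈ Icc z y, |g t - k| ≤ R := fun t ht => hmax ht
  have hxu : x < u := hxz.trans_le hu.1
  have hV := H.V x u hx hxu.le (hu.2.trans_lt hy)
  rw [hk x ⟨le_rfl, hxz.le⟩, ← hR] at hV
  have h2 := oscI_le_two H.cont hxu k
  have ci : ∀ a b, IntervalIntegrable (fun t => |g t - k|) volume a b := fun a b =>
    Continuous.intervalIntegrable ((H.cont.sub continuous_const).abs) _ _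
  have h3 : ∫ t in x..u, |g t - k| ≤ R * (u - z) := by
    rw [← intervalIntegral.integral_add_adjacent_intervals (ci x z) (ci z u)]
    have e1 : ∫ t in x..z, |g t - k| = 0 := by
      rw [intervalIntegral.integral_congr (g := fun _ => (0:ℝ))]
      · simp
      · intro t ht
        rw [uIcc_of_le hxz.le] at ht
        simp [hk t ht]
    have e2 : ∫ t in z..u, |g t - k| ≤ ∫ t in z..u, R := by
      apply intervalIntegral.integral_mono_on hu.1 (ci z u) (by simp)
      intro t ht
      exact hmax' t ⟨ht.1, ht.2.trans hu.2⟩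
    simp only [intervalIntegral.integral_const, smul_eq_mul] at e2
    linarith
  have hR0 : 0 ≤ R := abs_nonneg _
  have hRz : R = 0 := by
    by_contra hne
    have hRp : 0 < R := lt_of_le_of_ne hR0 (Ne.symm hne)
    have hL : 0 < u - x := by linarith
    have h4 : R ≤ 8 * ((u - x)⁻¹ * (R * (u - z))) := by
      have := mul_le_mul_of_nonneg_left h3 (inv_nonneg.2 hL.le)
      linarith
    have h5 : R * (u - x) ≤ 8 * (R * (u - z)) := by
      have := mul_le_mul_of_nonneg_right h4 hL.le
      calc _ ≤ _ := this
        _ = _ := by field_simp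
    have h6 : u - x ≤ 8 * (u - z) := by
      by_contra h7
      push Not at h7
      nlinarith
    linarith [hu.2]
  have := hmax' y ⟨hzy, le_rfl⟩
  rw [hRz] at this
  have := abs_eq_zero.1 (le_antisymm this (abs_nonneg _))
  linarith

theorem WH.flat_right {g : ℝ → ℝ} {p q : ℝ} (H : WH g p q) {x z k : ℝ} (hx : p < x) (hxz : x < z)
    (hk : ∀ t ∈ Icc x z, g t = k) : ∀ t, x ≤ t → t < q → g t = k := by
  set h := (z - x) / 16 with hh
  have hpos : 0 < h := by rw [hh]; linarith
  have key : ∀ n : ℕ, ∀ t, x ≤ t → t ≤ z + n * h → t < q → g t = k := by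
    intro n
    induction n with
    | zero =>
      intro t h1 h2 _
      exact hk t ⟨h1, by simpa using h2⟩
    | succ n ih =>
      intro t h1 h2 h3
      rcases le_total t (z + n * h) with h4 | h4
      · exact ih t h1 h4 h3
      push_cast at h2
      have hn : 0 ≤ (n:ℝ) * h := by positivity
      refine H.flat_step hx (z := z + n * h) (by linarith) ?_ h4 h3 (by linarith)
      intro s hs
      exact ih s hs.1 hs.2 (hs.2.trans_lt (h4.trans_lt h3))
  intro t h1 h2
  obtain ⟨n, hn⟩ := exists_nat_gt ((t - z) / h)
  rw [div_lt_iff₀ hpos] at hn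
  exact key n t h1 (by linarith) h2

theorem WH.flat_all {g : ℝ → ℝ} {p q : ℝ} (H : WH g p q) {x z k : ℝ} (hx : p < x) (hxz : x < z)
    (hz : z < q) (hk : ∀ t ∈ Icc x z, g t = k) : ∀ t ∈ Ioo p q, g t = k := by
  intro t ht
  rcases le_total x t with h | h
  · exact H.flat_right hx hxz hk t h ht.2
  · have := H.refl.flat_right (x := -z) (z := -x) (k := k) (by linarith) (by linarith)
      (fun s hs => hk (-s) ⟨by linarith [hs.2], by linarith [hs.1]⟩) (-t) (by linarith)
      (by linarith [ht.1])
    simpa using this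

theorem WH.flat_of_eq {g : ℝ → ℝ} {p q : ℝ} (H : WH g p q) {x y : ℝ} (hx : p < x) (hxy : x < y)
    (hy : y < q) (he : g x = g y) : ∀ t ∈ Icc x y, g t = g x := by
  have hL : 0 < y - x := by linarith
  have hne : (Icc x y).Nonempty := nonempty_Icc.2 hxy.le
  obtain ⟨u, hu, hmax⟩ := isCompact_Icc.exists_isMaxOn hne H.cont.continuousOn
  obtain ⟨v, hv, hmin⟩ := isCompact_Icc.exists_isMinOn hne H.cont.continuousOn
  have hmax' : ∀ t ∈ Icc x y, g t ≤ g u := fun t ht => hmax ht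
  have hmin' : ∀ t ∈ Icc x y, g v ≤ g t := fun t ht => hmin ht
  set M := g u with hM
  set n := g v with hn
  by_cases hMn : M ≤ n
  · intro t ht
    have h1 := hmax' t ht
    have h2 := hmin' t ht
    have h3 := hmax' x ⟨le_rfl, hxy.le⟩
    have h4 := hmin' x ⟨le_rfl, hxy.le⟩
    linarith
  exfalso
  push Not at hMn
  have hlow : 2 * (M - n) ≤ 4 * oscI g x y := by
    rcases le_total u v with huv | huv
    · have a1 := H.V x u hx hu.1 (hu.2.trans_lt hy)
      have a2 := H.V u v (hx.trans_le hu.1) huv (hv.2.trans_lt hy)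
      have a3 := H.V v y (hx.trans_le hv.1) hv.2 hy
      have s1 := H.S x u v hx hu.1 huv (hv.2.trans_lt hy)
      have s2 := H.S x v y hx hv.1 hv.2 hy
      have b1 := le_abs_self (g u - g x)
      have b2 := neg_abs_le (g v - g u)
      have b3 := le_abs_self (g y - g v)
      linarith
    · have a1 := H.V x v hx hv.1 (hv.2.trans_lt hy)
      have a2 := H.V v u (hx.trans_le hv.1) huv (hu.2.trans_lt hy)
      have a3 := H.V u y (hx.trans_le hu.1) hu.2 hy
      have s1 := H.S x v u hx hv.1 huv (hu.2.trans_lt hy)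
      have s2 := H.S x u y hx hu.1 hu.2 hy
      have b1 := neg_abs_le (g v - g x)
      have b2 := le_abs_self (g u - g v)
      have b3 := neg_abs_le (g y - g u)
      linarith
  unfold oscI at hlow
  set I := ∫ s in x..y, g s with hI
  set m := (y - x)⁻¹ * I with hm
  have hmI : m * (y - x) = I := by rw [hm]; field_simp
  have gi : IntervalIntegrable g volume x y := H.cont.intervalIntegrable _ _
  have hmM : m ≤ M := by
    have : I ≤ ∫ s in x..y, M :=
      intervalIntegral.integral_mono_on hxy.le gi (by simp) hmax'
    simp only [intervalIntegral.integral_const, smul_eq_mul] at this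
    rw [← hmI] at this
    by_contra h; push Not at h; nlinarith
  have hmn : n ≤ m := by
    have : ∫ s in x..y, n ≤ I :=
      intervalIntegral.integral_mono_on hxy.le (by simp) gi hmin'
    simp only [intervalIntegral.integral_const, smul_eq_mul] at this
    rw [← hmI] at this
    by_contra h; push Not at h; nlinarith
  obtain ⟨c, hc, hcm⟩ : ∃ c ∈ Icc x y, g c = m := by
    have := intermediate_value_uIcc (a := v) (b := u) (f := g) H.cont.continuousOn
    have hm' : m ∈ uIcc (g v) (g u) := by
      rw [uIcc_of_le (hmn.trans hmM)]; exact ⟨hmn, hmM⟩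
    obtain ⟨c, hc, hcm⟩ := this hm'
    exact ⟨c, (uIcc_subset_Icc hv hu) hc, hcm⟩
  have hIntg : ∫ t in x..y, ((M - g t) * (m - n) + (g t - n) * (M - m))
      = 2 * (M - m) * (m - n) * (y - x) := by
    have e : (fun t => (M - g t) * (m - n) + (g t - n) * (M - m))
        = fun t => (M * (m - n) - n * (M - m)) + (M + n - 2 * m) * g t := by
      funext t; ring
    rw [e, intervalIntegral.integral_add (by simp) (gi.const_mul _),
      intervalIntegral.integral_const_mul, ← hI, ← hmI]
    simp only [intervalIntegral.integral_const, smul_eq_mul]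
    ring
  have hpt : ∀ t ∈ Icc x y, (M - n) * |g t - m| ≤
      (M - g t) * (m - n) + (g t - n) * (M - m) := by
    intro t ht
    have h1 := hmax' t ht
    have h2 := hmin' t ht
    rcases abs_cases (g t - m) with ⟨h, _⟩ | ⟨h, _⟩ <;> rw [h]
    · nlinarith
    · nlinarith
  have hlow2 : (M - n) * (y - x) ≤ 2 * ∫ t in x..y, |g t - m| := by
    have := mul_le_mul_of_nonneg_right hlow hL.le
    have e : 4 * ((y - x)⁻¹ * ∫ t in x..y, |g t - m|) * (y - x)
      = 4 * ∫ t in x..y, |g t - m| := by field_simp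
    rw [e] at this
    linarith
  have c1 : Continuous (fun t => (M - n) * |g t - m|) := by
    have := H.cont; fun_prop
  have c2 : Continuous (fun t => (M - g t) * (m - n) + (g t - n) * (M - m)) := by
    have := H.cont; fun_prop
  have hle : (M - n) * ∫ t in x..y, |g t - m| ≤ 2 * (M - m) * (m - n) * (y - x) := by
    rw [← hIntg, ← intervalIntegral.integral_const_mul]
    exact intervalIntegral.integral_mono_on hxy.le (c1.intervalIntegrable _ _)
      (c2.intervalIntegrable _ _) hpt
  have hmul : (M - n) * ((M - n) * (y - x)) ≤ 2 * ((M - n) * ∫ t in x..y, |g t - m|) := by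
    have := mul_le_mul_of_nonneg_left hlow2 (sub_pos.2 hMn).le
    linarith
  have hp : 0 < (M - n) * (M - n) * (y - x) := by
    have := sub_pos.2 hMn
    positivity
  have hq : 4 * (M - m) * (m - n) * (y - x) ≤ (M - n) * (M - n) * (y - x) := by
    apply mul_le_mul_of_nonneg_right _ hL.le
    nlinarith [sq_nonneg ((M - m) - (m - n))]
  by_cases hdeg : (M - m) * (m - n) = 0
  · have : 2 * (M - m) * (m - n) * (y - x) = 0 := by
      rw [mul_assoc 2, hdeg]; ring
    linarith
  have hpos : 0 < (M - m) * (m - n) :=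
    lt_of_le_of_ne (mul_nonneg (by linarith) (by linarith)) (Ne.symm hdeg)
  have hlt : (M - n) * ∫ t in x..y, |g t - m| < 2 * (M - m) * (m - n) * (y - x) := by
    rw [← hIntg, ← intervalIntegral.integral_const_mul]
    apply intervalIntegral.integral_lt_integral_of_continuousOn_of_le_of_exists_lt hxy
      c1.continuousOn c2.continuousOn (fun t ht => hpt t ⟨ht.1.le, ht.2⟩)
    refine ⟨c, hc, ?_⟩
    rw [hcm, sub_self, abs_zero, mul_zero]
    linarith
  linarith

theorem GH.affine_of_mono {g : ℝ → ℝ} {p q : ℝ} (H : GH g p q) (hm : StrictMonoOn g (Ioo p q)) :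
    ∃ α β, ∀ t ∈ Ioo p q, g t = α * t + β := by
  obtain ⟨K, hK⟩ := H.lip
  have hc := hK.continuous
  have gi : ∀ a b, IntervalIntegrable g volume a b := fun a b => hc.intervalIntegrable _ _
  have C : CoreH g (fun t => ∫ s in (0:ℝ)..t, g s) p q := by
    refine ⟨hc, ?_, hm, ?_⟩
    · intro t
      exact intervalIntegral.integral_hasDerivAt_right (gi _ _)
        (hc.stronglyMeasurableAtFilter _ _) hc.continuousAt
    · intro x c y hx hxc hcy hy hmean
      rw [intervalIntegral.integral_interval_sub_left (gi _ _) (gi _ _)] at hmean ⊢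
      have hxy := hxc.trans hcy
      have hL : 0 < y - x := by linarith
      have hmon : MonotoneOn g (Icc x y) :=
        hm.monotoneOn.mono (Icc_subset_Ioo hx hy)
      have h1 := varD_le_of_mono hK hxy hmon
      have h2 := varD_ge_of_cont hc hxy
      have hg0 : 0 ≤ g y - g x := sub_nonneg.2 (hmon ⟨le_rfl, hxy.le⟩ ⟨hxy.le, le_rfl⟩ hxy.le)
      rw [abs_of_nonneg hg0] at h2
      have h3 := le_antisymm h1 h2
      rw [H.hid x y hx hxy hy, four_ofReal] at h3
      have h4 : 4 * oscI g x y = g y - g x :=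
        (ENNReal.ofReal_eq_ofReal_iff (by linarith [oscI_nonneg g hxy.le]) hg0).1 h3
      rw [← h4]
      unfold oscI
      have hmm : (y - x)⁻¹ * ∫ s in x..y, g s = g c := by
        rw [← hmean]; field_simp
      rw [hmm]
      have ai : ∀ a b, IntervalIntegrable (fun t => |g t - g c|) volume a b := fun a b =>
        Continuous.intervalIntegrable (by fun_prop) _ _
      have e1 : ∫ t in x..c, |g t - g c| = g c * (c - x) - ∫ t in x..c, g t := by
        rw [intervalIntegral.integral_congr (g := fun t => g c - g t)]
        · rw [intervalIntegral.integral_sub (by simp) (gi _ _)]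
          simp [mul_comm]
        · intro t ht
          rw [uIcc_of_le hxc.le] at ht
          have := hmon ⟨ht.1, ht.2.trans hcy.le⟩ ⟨hxc.le, hcy.le⟩ ht.2
          simp only
          rw [abs_of_nonpos (by linarith)]; ring
      have e2 : ∫ t in c..y, |g t - g c| = (∫ t in c..y, g t) - g c * (y - c) := by
        rw [intervalIntegral.integral_congr (g := fun t => g t - g c)]
        · rw [intervalIntegral.integral_sub (gi _ _) (by simp)]
          simp [mul_comm]
        · intro t ht
          rw [uIcc_of_le hcy.le] at ht
          have := hmon ⟨hxc.le, hcy.le⟩ ⟨hxc.le.trans ht.1, ht.2⟩ ht.1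
          simp only
          rw [abs_of_nonneg (by linarith)]
      have e3 := intervalIntegral.integral_add_adjacent_intervals (gi x c) (gi c y)
      have e4 : ∫ t in x..y, |g t - g c| = 2 * (g c * (c - x) - ∫ t in x..c, g t) := by
        rw [← intervalIntegral.integral_add_adjacent_intervals (ai x c) (ai c y), e1, e2]
        linarith
      rw [e4]
      field_simp
      ring
  exact C.affine

theorem GH.affine {g : ℝ → ℝ} {p q : ℝ} (H : GH g p q) (hpq : p < q) :
    ∃ α β, ∀ t ∈ Ioo p q, g t = α * t + β := by
  by_cases hinj : InjOn g (Ioo p q)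
  · rcases H.wh.cont.continuousOn.strictMonoOn_of_injOn_Ioo hpq hinj with h | h
    · exact H.affine_of_mono h
    · obtain ⟨α, β, hab⟩ := H.neg.affine_of_mono (fun s hs t ht hst => neg_lt_neg (h hs ht hst))
      refine ⟨-α, -β, fun t ht => ?_⟩
      have := hab t ht
      simp only [Pi.neg_apply] at this
      linarith
  · have : ∃ x ∈ Ioo p q, ∃ y ∈ Ioo p q, x < y ∧ g x = g y := by
      unfold InjOn at hinj
      push Not at hinj
      obtain ⟨x, hx, y, hy, he, hne⟩ := hinj
      rcases lt_or_gt_of_ne hne with h | h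
      · exact ⟨x, hx, y, hy, h, he⟩
      · exact ⟨y, hy, x, hx, h, he.symm⟩
    obtain ⟨x, hx, y, hy, hxy, he⟩ := this
    have := H.wh.flat_all hx.1 hxy hy.2 (H.wh.flat_of_eq hx.1 hxy hy.2 he)
    exact ⟨0, g x, fun t ht => by rw [this t ht]; ring⟩

theorem exists_Ioo_of_ae {Pr : ℝ → Prop} (h : ∀ᵐ t, Pr t) {x y : ℝ} (hxy : x < y) :
    ∃ t, Pr t ∧ x < t ∧ t < y := by
  have hd : Dense {t | Pr t} := Measure.dense_of_ae h
  obtain ⟨t, ht, h1, h2⟩ := hd.exists_between hxy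
  exact ⟨t, ht, h1, h2⟩

theorem osc_step {h : ℝ → ℝ} (hh : Integrable h) {M : ℝ} (hM0 : 0 ≤ M)
    (hM : ∀ᵐ t, |h t| ≤ M) {x y z : ℝ} (hxy : x < y) (hyz : y ≤ z) :
    oscI h x z ≤ oscI h x y + 4 * M * (z - y) / (y - x) := by
  have hi : ∀ a b, IntervalIntegrable h volume a b := fun a b => hh.intervalIntegrable
  have hL : 0 < y - x := by linarith
  have hL' : 0 < z - x := by linarith
  have hb : ∀ a b, a ≤ b → |∫ t in a..b, h t| ≤ M * (b - a) := by
    intro a b hab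
    have := intervalIntegral.norm_integral_le_of_norm_le_const_ae (a := a) (b := b) (C := M) (f := h)
      (by filter_upwards [hM] with t ht _; simpa using ht)
    rwa [Real.norm_eq_abs, abs_of_nonneg (by linarith : (0:ℝ) ≤ b - a)] at this
  unfold oscI
  set m := (y - x)⁻¹ * ∫ s in x..y, h s with hm
  set m' := (z - x)⁻¹ * ∫ s in x..z, h s with hm'
  have e1 : m * (y - x) = ∫ s in x..y, h s := by rw [hm]; field_simp
  have e2 : m' * (z - x) = ∫ s in x..z, h s := by rw [hm']; field_simp
  have e3 := intervalIntegral.integral_add_adjacent_intervals (hi x y) (hi y z)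
  have hmM : |m| ≤ M := by
    have := hb x y hxy.le
    rw [← e1, abs_mul, abs_of_pos hL] at this
    exact le_of_mul_le_mul_right this hL
  have hmM' : |m'| ≤ M := by
    have := hb x z (by linarith)
    rw [← e2, abs_mul, abs_of_pos hL'] at this
    exact le_of_mul_le_mul_right this hL'
  have hd : |m' - m| * (y - x) ≤ 2 * M * (z - y) := by
    have e : (m' - m) * (z - x) = -m * (z - y) + ∫ s in y..z, h s := by linarith
    have h1 : |m' - m| * (z - x) ≤ 2 * M * (z - y) := by
      rw [← abs_of_pos hL', ← abs_mul, e]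
      refine (abs_add_le _ _).trans ?_
      rw [abs_mul, abs_neg, abs_of_nonneg (by linarith : (0:ℝ) ≤ z - y)]
      have := hb y z hyz
      have := mul_le_mul_of_nonneg_right hmM (by linarith : (0:ℝ) ≤ z - y)
      linarith
    have h2 : |m' - m| * (y - x) ≤ |m' - m| * (z - x) :=
      mul_le_mul_of_nonneg_left (by linarith) (abs_nonneg _)
    linarith
  have ai : ∀ k a b, IntervalIntegrable (fun t => |h t - k|) volume a b := fun k a b =>
    ((hi a b).sub (by simp)).abs
  have h1 : ∫ t in x..y, |h t - m'| ≤ (∫ t in x..y, |h t - m|) + 2 * M * (z - y) := by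
    have : ∫ t in x..y, |h t - m'| ≤ ∫ t in x..y, (|h t - m| + |m' - m|) := by
      apply intervalIntegral.integral_mono_on hxy.le (ai _ _ _) ((ai _ _ _).add (by simp))
      intro t _
      have := abs_sub (h t - m) (m' - m)
      rwa [sub_sub_sub_cancel_right] at this
    rw [intervalIntegral.integral_add (ai _ _ _) (by simp)] at this
    simp only [intervalIntegral.integral_const, smul_eq_mul] at this
    linarith
  have h2 : ∫ t in y..z, |h t - m'| ≤ 2 * M * (z - y) := by
    have := intervalIntegral.norm_integral_le_of_norm_le_const_ae (a := y) (b := z) (C := 2 * M)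
      (f := fun t => |h t - m'|)
      (by
        filter_upwards [hM] with t ht _
        rw [Real.norm_eq_abs, abs_abs]
        have := abs_sub (h t) m'
        linarith)
    rw [abs_of_nonneg (by linarith : (0:ℝ) ≤ z - y)] at this
    exact (le_abs_self _).trans this
  have h3 := intervalIntegral.integral_add_adjacent_intervals (ai m' x y) (ai m' y z)
  set A := ∫ t in x..y, |h t - m| with hA
  have hA0 : 0 ≤ A := intervalIntegral.integral_nonneg hxy.le fun _ _ => abs_nonneg _
  have h4 : ∫ t in x..z, |h t - m'| ≤ A + 4 * M * (z - y) := by linarith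
  have h5 : (z - x)⁻¹ ≤ (y - x)⁻¹ := by
    apply inv_anti₀ hL; linarith
  have h6 : 0 ≤ A + 4 * M * (z - y) := by
    have := mul_nonneg hM0 (by linarith : (0:ℝ) ≤ z - y)
    linarith
  calc (z - x)⁻¹ * ∫ t in x..z, |h t - m'| ≤ (z - x)⁻¹ * (A + 4 * M * (z - y)) :=
        mul_le_mul_of_nonneg_left h4 (inv_nonneg.2 hL'.le)
    _ ≤ (y - x)⁻¹ * (A + 4 * M * (z - y)) := mul_le_mul_of_nonneg_right h5 h6
    _ = _ := by rw [div_eq_inv_mul]; ring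

theorem local_affine {a b : ℝ} {f : ℝ → ℝ}
    (hf : LocallyIntegrableOn f (Set.Ioo a b))
    (hid : ∀ x y, a < x → x < y → y < b →
      varD f x y = 4 * ENNReal.ofReal (oscI f x y)) {P p Q : ℝ} (haP : a < P) (hPp : P < p)
    (hpQ : p < Q) (hQb : Q < b) :
    ∃ α β : ℝ, ∀ᵐ t, t ∈ Ioo p Q → f t = α * t + β := by
  set f0 : ℝ → ℝ := indicator (Icc P Q) f with hf0
  have hPQ : P < Q := hPp.trans hpQ
  have hIntg : Integrable f0 := by
    rw [hf0, integrable_indicator_iff measurableSet_Icc]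
    exact hf.integrableOn_compact_subset (Icc_subset_Ioo haP hQb) isCompact_Icc
  have hloc := hIntg.locallyIntegrable
  have heq : ∀ t ∈ Icc P Q, f0 t = f t := fun t ht => indicator_of_mem ht f
  have hid0 : ∀ x y, P ≤ x → x < y → y ≤ Q →
      varD f0 x y = 4 * ENNReal.ofReal (oscI f0 x y) := by
    intro x y hx hxy hy
    have hc : ∀ᵐ t, t ∈ Ioo x y → f0 t = f t := Eventually.of_forall fun t ht =>
      heq t ⟨hx.trans ht.1.le, ht.2.le.trans hy⟩
    rw [varD_congr hxy.le hc, oscI_congr hxy.le hc]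
    exact hid x y (haP.trans_le hx) hxy (hy.trans_lt hQb)
  have hE := convS_ae hloc
  -- boundedness
  obtain ⟨M, hM0, hM⟩ : ∃ M, 0 ≤ M ∧ ∀ᵐ t, |f0 t| ≤ M := by
    obtain ⟨s, hs, hs1, hs2⟩ := exists_Ioo_of_ae hE hPQ
    have ho := oscI_nonneg f0 hPQ.le
    refine ⟨|f0 s| + 4 * oscI f0 P Q, by positivity, ?_⟩
    have hnP : ∀ᵐ t : ℝ, t ≠ P := by simp [ae_iff]
    have hnQ : ∀ᵐ t : ℝ, t ≠ Q := by simp [ae_iff]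
    filter_upwards [hE, hnP, hnQ] with t ht htP htQ
    by_cases hm : t ∈ Icc P Q
    · have h1 := lim_le_varD hloc (x := P) (y := Q)
        ⟨lt_of_le_of_ne hm.1 (Ne.symm htP), lt_of_le_of_ne hm.2 htQ⟩ ⟨hs1, hs2⟩ ht hs
      rw [hid0 P Q le_rfl hPQ le_rfl, four_ofReal,
        ENNReal.ofReal_le_ofReal_iff (by linarith)] at h1
      have h2 := abs_sub_abs_le_abs_sub (f0 t) (f0 s)
      linarith
    · rw [hf0, indicator_of_notMem hm, abs_zero]; positivity
  set C := 16 * M / (p - P) with hC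
  have hpP : 0 < p - P := by linarith
  have hC0 : 0 ≤ C := by positivity
  have hvar : ∀ y z, p ≤ y → y < z → z ≤ Q → varD f0 y z ≤ ENNReal.ofReal (C * (z - y)) := by
    intro y z hy hyz hz
    have hPy : P < y := hPp.trans_le hy
    have h1 := varD_super hloc hPy.le hyz.le
    have ho := oscI_nonneg f0 hPy.le
    have hz0 : 0 ≤ z - y := by linarith
    rw [hid0 P y le_rfl hPy (by linarith), hid0 P z le_rfl (by linarith) hz, four_ofReal,
      four_ofReal] at h1
    have h2 := osc_step hIntg hM0 hM hPy hyz.le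
    have h3 : 4 * M * (z - y) / (y - P) ≤ 4 * M * (z - y) / (p - P) := by
      apply div_le_div_of_nonneg_left (by positivity) hpP (by linarith)
    have h4 : 4 * oscI f0 P z ≤ 4 * oscI f0 P y + C * (z - y) := by
      have : C * (z - y) = 4 * (4 * M * (z - y) / (p - P)) := by rw [hC]; ring
      linarith
    have h5 := h1.trans (ENNReal.ofReal_le_ofReal h4)
    rw [ENNReal.ofReal_add (by linarith) (by positivity)] at h5
    exact (ENNReal.add_le_add_iff_left ENNReal.ofReal_ne_top).1 h5
  set E : Set ℝ := {s | s ∈ Ioo p Q ∧ Tendsto (fun n => convS f0 n s) atTop (𝓝 (f0 s))} with hEd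
  have hlt : ∀ s ∈ E, ∀ t ∈ E, s < t → |f0 s - f0 t| ≤ C * (t - s) := by
    intro s hs t ht hst
    have L : Tendsto (fun h : ℝ => C * ((t + h) - (s - h))) (𝓝[>] 0) (𝓝 (C * (t - s))) :=
      ((tendsto_addpos t).sub (tendsto_subpos s)).const_mul C
    refine ge_of_tendsto L ?_
    have hs1 := hs.1.1
    have ht2 := ht.1.2
    have : Ioo (0:ℝ) (min (s - p) (Q - t)) ∈ 𝓝[>] (0:ℝ) :=
      Ioo_mem_nhdsGT (lt_min (by linarith) (by linarith))
    filter_upwards [this] with h hh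
    have h0 := hh.1
    have h1 := hh.2.trans_le (min_le_left _ _)
    have h2 := hh.2.trans_le (min_le_right _ _)
    have h3 := lim_le_varD hloc (x := s - h) (y := t + h) ⟨by linarith, by linarith⟩
      ⟨by linarith, by linarith⟩ hs.2 ht.2
    have h4 := h3.trans (hvar (s - h) (t + h) (by linarith) (by linarith) (by linarith))
    exact (ENNReal.ofReal_le_ofReal_iff (mul_nonneg hC0 (by linarith))).1 h4
  have hlip : LipschitzOnWith C.toNNReal f0 E := by
    apply LipschitzOnWith.of_dist_le_mul
    intro s hs t ht
    rw [Real.dist_eq, Real.dist_eq, Real.coe_toNNReal C hC0]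
    rcases lt_trichotomy s t with h | h | h
    · rw [abs_sub_comm s t, abs_of_pos (by linarith : 0 < t - s)]
      exact hlt s hs t ht h
    · subst h; simp
    · rw [abs_sub_comm, abs_of_pos (by linarith : 0 < s - t)]
      exact hlt t ht s hs h
  obtain ⟨g, hg, hgE⟩ := hlip.extend_real
  have hfg : ∀ᵐ t, t ∈ Ioo p Q → f0 t = g t := by
    filter_upwards [hE] with t ht hm
    exact hgE ⟨hm, ht⟩
  have HG : GH g p Q := by
    refine ⟨⟨_, hg⟩, ?_⟩
    intro x y hx hxy hy
    have hc : ∀ᵐ t, t ∈ Ioo x y → f0 t = g t := by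
      filter_upwards [hfg] with t ht hm
      exact ht ⟨hx.trans hm.1, hm.2.trans hy⟩
    rw [← varD_congr hxy.le hc, ← oscI_congr hxy.le hc]
    exact hid0 x y (by linarith) hxy hy.le
  obtain ⟨α, β, hab⟩ := HG.affine hpQ
  refine ⟨α, β, ?_⟩
  filter_upwards [hfg] with t ht hm
  rw [← hab t hm, ← ht hm]
  exact (heq t ⟨hPp.le.trans hm.1.le, hm.2.le⟩).symm

/-- Main theorem: a locally integrable `f : (a,b) → ℝ` satisfying
`osc(f, I) = (1/4)|Df|(I)` for every open interval `I ⊂⊂ (a, b)` is affine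
(almost everywhere). -/
theorem main_affine_rigidity (a b : ℝ) (hab : a < b) (f : ℝ → ℝ)
    (hf : LocallyIntegrableOn f (Set.Ioo a b))
    (hid : ∀ x y, a < x → x < y → y < b →
      varD f x y = 4 * ENNReal.ofReal (oscI f x y)) :
    ∃ α β : ℝ, ∀ᵐ x ∂(volume.restrict (Set.Ioo a b)), f x = α * x + β := by
  set d := b - a with hd
  have hd0 : 0 < d := by rw [hd]; linarith
  set e : ℕ → ℝ := fun n => d / ((n : ℝ) + 3) with he
  have hepos : ∀ n, 0 < e n := fun n => by simp only [he]; positivity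
  have hele : ∀ n, e n ≤ d / 3 := by
    intro n
    simp only [he]
    apply div_le_div_of_nonneg_left hd0.le (by norm_num)
    have : (0:ℝ) ≤ n := n.cast_nonneg
    linarith
  have hloc : ∀ n, ∃ α β : ℝ, ∀ᵐ t, t ∈ Ioo (a + e n) (b - e n) → f t = α * t + β := by
    intro n
    have h1 := hepos n
    have h2 := hele n
    exact local_affine hf hid (P := a + e n / 2) (by linarith) (by linarith)
      (by linarith) (by linarith)
  choose α β hab' using hloc
  have hall : ∀ᵐ t, ∀ n, t ∈ Ioo (a + e n) (b - e n) → f t = α n * t + β n := ae_all_iff.2 hab'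
  have hsame : ∀ n, α n = α 0 ∧ β n = β 0 := by
    intro n
    obtain ⟨s, hs, hs1, hs2⟩ := exists_Ioo_of_ae hall
      (show a + d / 3 < a + d / 2 by linarith)
    obtain ⟨t, ht, ht1, ht2⟩ := exists_Ioo_of_ae hall
      (show a + d / 2 < b - d / 3 by linarith)
    have hn := hele n
    have h0 := hele 0
    have a1 := hs n ⟨by linarith, by linarith⟩
    have a2 := hs 0 ⟨by linarith, by linarith⟩
    have a3 := ht n ⟨by linarith, by linarith⟩
    have a4 := ht 0 ⟨by linarith, by linarith⟩
    have hz : (α n - α 0) * (t - s) = 0 := by linarith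
    have hα : α n = α 0 := by
      rcases mul_eq_zero.1 hz with h | h
      · linarith
      · linarith
    refine ⟨hα, ?_⟩
    rw [hα] at a1
    linarith
  refine ⟨α 0, β 0, ?_⟩
  rw [ae_restrict_iff' measurableSet_Ioo]
  filter_upwards [hall] with t ht hm
  have hlim : Tendsto e atTop (𝓝 0) := by
    have h1 : Tendsto (fun n : ℕ => (n : ℝ) + 3) atTop atTop :=
      tendsto_atTop_add_const_right _ _ tendsto_natCast_atTop_atTop
    exact tendsto_const_nhds.div_atTop h1
  have ev1 := hlim.eventually_lt_const (show 0 < t - a by linarith [hm.1])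
  have ev2 := hlim.eventually_lt_const (show 0 < b - t by linarith [hm.2])
  obtain ⟨n, hn1, hn2⟩ := (ev1.and ev2).exists
  rw [ht n ⟨by linarith, by linarith⟩, (hsame n).1, (hsame n).2]
end
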